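/- arXiv:1507.04838 — 3 statements merged into one kernel-verified Lean document; each statement's English description precedes it below -/
import Mathlib

section
/- Let n ≥ 1 and let α be an element of the Motzkin monoid M_n. Then α is idempotent (α² = α) if and only if every connected component of the interface graph Γ(α) is a cycle, an inert path, or a trans-active path. -/
open Relation

/-! ### The partition monoid and its planar submonoids -/

/-- Vertices of a partition diagram: `Sum.inl i` is the upper vertex `i`,
`Sum.inr i` is the lower vertex `i′`. -/
abbrev PV (n : ℕ) := Fin n ⊕ Fin n

/-- An element of the partition monoid `P_n`: a set partition of the `2n` vertices,
encoded as an equivalence relation (setoid). -/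
abbrev PElt (n : ℕ) := Setoid (PV n)

/-- Three layers of vertices, used to form products. -/
abbrev TV (n : ℕ) := Fin n ⊕ (Fin n ⊕ Fin n)

/-- Embedding of the vertices of the upper factor into the three layers. -/
def upEmb {n : ℕ} : PV n → TV n
  | .inl i => .inl i
  | .inr i => .inr (.inl i)

/-- Embedding of the vertices of the lower factor into the three layers. -/
def downEmb {n : ℕ} : PV n → TV n
  | .inl i => .inr (.inl i)
  | .inr i => .inr (.inr i)

/-- Embedding of the vertices of the product into the three layers. -/
def outEmb {n : ℕ} : PV n → TV n
  | .inl i => .inl i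
  | .inr i => .inr (.inr i)

/-- The stacked graph of `a` on `b`: relations of `a` on layers 1–2 together with
relations of `b` on layers 2–3. -/
def stackRel {n : ℕ} (a b : PElt n) : TV n → TV n → Prop := fun x y =>
  (∃ p q : PV n, a.r p q ∧ x = upEmb p ∧ y = upEmb q) ∨
  (∃ p q : PV n, b.r p q ∧ x = downEmb p ∧ y = downEmb q)

/-- The finest common coarsening (transitive closure) of the stacked graph. -/
def stackSetoid {n : ℕ} (a b : PElt n) : Setoid (TV n) :=
  EqvGen.setoid (stackRel a b)

/-- The product in the partition monoid: restrict the coarsening of the stacked graph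
to the outer two layers. -/
def pmul {n : ℕ} (a b : PElt n) : PElt n :=
  Setoid.comap outEmb (stackSetoid a b)

/-- The identity of the partition monoid: blocks `{i, i′}`. -/
def pid (n : ℕ) : PElt n :=
  ⟨fun x y => Sum.elim id id x = Sum.elim id id y,
    ⟨fun _ => rfl, fun h => h.symm, fun h₁ h₂ => h₁.trans h₂⟩⟩

/-- A vertex of the triple-layer graph lies in the identified middle row. -/
def isMiddle {n : ℕ} : TV n → Prop
  | .inr (.inl _) => True
  | _ => False

/-- `m(a,b)`: the number of floating components (components of the stacked graph of `a` on `b`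
contained entirely in the identified middle row). -/
noncomputable def floatCount {n : ℕ} (a b : PElt n) : ℕ :=
  Nat.card {c : Quotient (stackSetoid a b) //
    ∀ x : TV n, Quotient.mk (stackSetoid a b) x = c → isMiddle x}

/-- A block (equivalence class) is a transversal if it contains both an upper
and a lower vertex. -/
def IsTransClass {n : ℕ} (a : PElt n) (c : Quotient a) : Prop :=
  (∃ i : Fin n, Quotient.mk a (.inl i) = c) ∧ (∃ j : Fin n, Quotient.mk a (.inr j) = c)

/-- The rank of a partition: the number of transversal blocks. -/
noncomputable def prank {n : ℕ} (a : PElt n) : ℕ :=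
  Nat.card {c : Quotient a // IsTransClass a c}

/-- Position of a vertex in the boundary order `1, …, n, n′, …, 1′` of the rectangle. -/
def ordIdx (n : ℕ) : PV n → ℕ
  | .inl i => i.val
  | .inr i => 2 * n - 1 - i.val

/-- Planarity: the partition is non-crossing with respect to the boundary order
`1 < ⋯ < n < n′ < ⋯ < 1′`. -/
def IsPlanar {n : ℕ} (a : PElt n) : Prop :=
  ¬ ∃ w x y z : PV n, ordIdx n w < ordIdx n x ∧ ordIdx n x < ordIdx n y ∧
      ordIdx n y < ordIdx n z ∧ a.r w y ∧ a.r x z ∧ ¬ a.r w x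

/-- The size of the block containing a given vertex. -/
noncomputable def blockCard {n : ℕ} (a : PElt n) (x : PV n) : ℕ :=
  Nat.card {y : PV n // a.r x y}

/-- The Motzkin monoid: planar partitions with all blocks of size at most 2. -/
def Motzkin (n : ℕ) : Set (PElt n) :=
  {a | IsPlanar a ∧ ∀ x : PV n, blockCard a x ≤ 2}

/-- The Jones (Temperley–Lieb) monoid: planar partitions with all blocks of size
exactly 2. -/
def Jones (n : ℕ) : Set (PElt n) :=
  {a | IsPlanar a ∧ ∀ x : PV n, blockCard a x = 2}

/-! ### The interface graph -/

/-- Lower edge of the interface graph `Γ(a)`: a block `{i,j}` of `a` on upper vertices. -/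
def LowEdge {n : ℕ} (a : PElt n) (i j : Fin n) : Prop :=
  i ≠ j ∧ a.r (.inl i) (.inl j)

/-- Upper edge of the interface graph `Γ(a)`: a block `{i′,j′}` of `a` on lower vertices. -/
def UpEdge {n : ℕ} (a : PElt n) (i j : Fin n) : Prop :=
  i ≠ j ∧ a.r (.inr i) (.inr j)

/-- Vertex `i` of `Γ(a)` carries a lower edge. -/
def hasLow {n : ℕ} (a : PElt n) (i : Fin n) : Prop := ∃ j, LowEdge a i j

/-- Vertex `i` of `Γ(a)` carries an upper edge. -/
def hasUp {n : ℕ} (a : PElt n) (i : Fin n) : Prop := ∃ j, UpEdge a i j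

/-- Vertex `i` is active downwards: the upper vertex `i` lies in a transversal of `a`. -/
def activeDown {n : ℕ} (a : PElt n) (i : Fin n) : Prop := ∃ j : Fin n, a.r (.inl i) (.inr j)

/-- Vertex `i` is active upwards: the lower vertex `i′` lies in a transversal of `a`. -/
def activeUp {n : ℕ} (a : PElt n) (i : Fin n) : Prop := ∃ j : Fin n, a.r (.inr i) (.inl j)

/-- Vertex `i` is inert downwards: the upper vertex `i` is a singleton block of `a`. -/
def inertDown {n : ℕ} (a : PElt n) (i : Fin n) : Prop := ∀ y, a.r (.inl i) y → y = .inl i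

/-- Vertex `i` is inert upwards: the lower vertex `i′` is a singleton block of `a`. -/
def inertUp {n : ℕ} (a : PElt n) (i : Fin n) : Prop := ∀ y, a.r (.inr i) y → y = .inr i

/-- Adjacency in the interface graph `Γ(a)`. -/
def gedge {n : ℕ} (a : PElt n) (i j : Fin n) : Prop := LowEdge a i j ∨ UpEdge a i j

/-- Connectivity in the interface graph `Γ(a)`. -/
def gconn {n : ℕ} (a : PElt n) : Fin n → Fin n → Prop := EqvGen (gedge a)

/-- `θ` is (the vertex set of) a connected component of `Γ(a)`. -/
def IsComp {n : ℕ} (a : PElt n) (θ : Set (Fin n)) : Prop :=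
  θ.Nonempty ∧ ∀ i ∈ θ, ∀ j : Fin n, (gconn a i j ↔ j ∈ θ)

/-- `θ` is a cycle component of `Γ(a)`: every vertex carries both a lower and an upper edge. -/
def IsCycleComp {n : ℕ} (a : PElt n) (θ : Set (Fin n)) : Prop :=
  IsComp a θ ∧ ∀ i ∈ θ, hasLow a i ∧ hasUp a i

/-- `θ` is a path component of `Γ(a)`: some vertex misses an edge on some side. -/
def IsPathComp {n : ℕ} (a : PElt n) (θ : Set (Fin n)) : Prop :=
  IsComp a θ ∧ ∃ i ∈ θ, ¬ hasLow a i ∨ ¬ hasUp a i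

/-- An inert path: every terminus is inert on its free side. -/
def IsInertPathComp {n : ℕ} (a : PElt n) (θ : Set (Fin n)) : Prop :=
  IsPathComp a θ ∧ ∀ i ∈ θ,
    (¬ hasLow a i → inertDown a i) ∧ (¬ hasUp a i → inertUp a i)

/-- A trans-active path: even length (its two free ends lie on opposite sides) with
both termini active on their free sides. -/
def IsTransActivePathComp {n : ℕ} (a : PElt n) (θ : Set (Fin n)) : Prop :=
  IsPathComp a θ ∧
  (∃! i : Fin n, i ∈ θ ∧ ¬ hasLow a i) ∧ (∃! i : Fin n, i ∈ θ ∧ ¬ hasUp a i) ∧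
  ∀ i ∈ θ, (¬ hasLow a i → activeDown a i) ∧ (¬ hasUp a i → activeUp a i)

/-- The number of edges of `Γ(a)` contained in `θ` (its length, for a component `θ`). -/
noncomputable def compEdgeCount {n : ℕ} (a : PElt n) (θ : Set (Fin n)) : ℕ :=
  Nat.card {p : Fin n × Fin n // p.1 < p.2 ∧ p.1 ∈ θ ∧ p.2 ∈ θ ∧ LowEdge a p.1 p.2} +
  Nat.card {p : Fin n × Fin n // p.1 < p.2 ∧ p.1 ∈ θ ∧ p.2 ∈ θ ∧ UpEdge a p.1 p.2}

/-! ### The map `α ↦ α̂` and the sets `D`, `Θ(δ)` -/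

/-- The 0-based position of `i` among the upward-active vertices. -/
noncomputable def posUp {n : ℕ} (a : PElt n) (i : Fin n) : ℕ :=
  Nat.card {j : Fin n // j < i ∧ activeUp a j}

/-- The 0-based position of `i` among the downward-active vertices. -/
noncomputable def posDown {n : ℕ} (a : PElt n) (i : Fin n) : ℕ :=
  Nat.card {j : Fin n // j < i ∧ activeDown a j}

/-- `i` and `j` are consecutive upward-active vertices paired in forming `α̂`
(`i` in an even position `2t`, `j` in position `2t+1 < 2⌊r/2⌋`). -/
noncomputable def pairedUp {n : ℕ} (a : PElt n) (i j : Fin n) : Prop :=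
  activeUp a i ∧ activeUp a j ∧ Even (posUp a i) ∧ posUp a j = posUp a i + 1 ∧
    posUp a j < 2 * (prank a / 2)

/-- `i` and `j` are consecutive downward-active vertices paired in forming `α̂`. -/
noncomputable def pairedDown {n : ℕ} (a : PElt n) (i j : Fin n) : Prop :=
  activeDown a i ∧ activeDown a j ∧ Even (posDown a i) ∧ posDown a j = posDown a i + 1 ∧
    posDown a j < 2 * (prank a / 2)

/-- The transversal relations removed in forming `α̂` (those of the first `2⌊r/2⌋`
transversals). -/
noncomputable def removedTrans {n : ℕ} (a : PElt n) (x y : PV n) : Prop :=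
  ∃ i j : Fin n, a.r (.inl i) (.inr j) ∧ posDown a i < 2 * (prank a / 2) ∧
    ((x = .inl i ∧ y = .inr j) ∨ (x = .inr j ∧ y = .inl i))

/-- The generating relation of `α̂`: the relations of `α` minus the removed transversals,
plus the new blocks pairing consecutive active vertices. -/
noncomputable def hatRel {n : ℕ} (a : PElt n) (x y : PV n) : Prop :=
  (a.r x y ∧ ¬ removedTrans a x y) ∨
  (∃ i j : Fin n, pairedUp a i j ∧
      ((x = .inr i ∧ y = .inr j) ∨ (x = .inr j ∧ y = .inr i))) ∨
  (∃ i j : Fin n, pairedDown a i j ∧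
      ((x = .inl i ∧ y = .inl j) ∨ (x = .inl j ∧ y = .inl i)))

/-- The element `α̂` obtained from `α` by pairing off consecutive active vertices. -/
noncomputable def hat {n : ℕ} (a : PElt n) : PElt n := EqvGen.setoid (hatRel a)

/-- The idempotents of a subset `S` (with respect to the partition product). -/
def Eset {n : ℕ} (S : Set (PElt n)) : Set (PElt n) := {a ∈ S | pmul a a = a}

/-- `D(S) = D₀ ∪ E(D₁)`: the idempotents of `S` of rank at most 1. -/
def Dset {n : ℕ} (S : Set (PElt n)) : Set (PElt n) :=
  {d ∈ S | pmul d d = d ∧ prank d ≤ 1}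

/-- `θ` lies (entirely) to the left of the leftmost transversal of `a`. -/
def LeftOfTrans {n : ℕ} (a : PElt n) (θ : Set (Fin n)) : Prop :=
  ∀ i ∈ θ, ∀ j : Fin n, activeDown a j ∨ activeUp a j → i < j

/-- `Θ(a)`: the cycle components of `Γ(a)` lying entirely to the left of the leftmost
transversal. -/
def ThetaSet {n : ℕ} (a : PElt n) : Set (Set (Fin n)) :=
  {θ | IsCycleComp a θ ∧ LeftOfTrans a θ}

/-! ### Returns, special pairs and `θ`-covers -/

/-- The block `{i,j}` of `a` on upper vertices is an upper return: no upper block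
`{k,l}` has `k<i<j<l`, and no transversal contains an upper vertex smaller than `i`. -/
def UpperReturn {n : ℕ} (a : PElt n) (i j : Fin n) : Prop :=
  i < j ∧ a.r (.inl i) (.inl j) ∧
  (¬ ∃ k l : Fin n, k < i ∧ j < l ∧ a.r (.inl k) (.inl l)) ∧
  (¬ ∃ k : Fin n, k < i ∧ activeDown a k)

/-- The block `{i′,j′}` of `a` on lower vertices is a lower return. -/
def LowerReturn {n : ℕ} (a : PElt n) (i j : Fin n) : Prop :=
  i < j ∧ a.r (.inr i) (.inr j) ∧
  (¬ ∃ k l : Fin n, k < i ∧ j < l ∧ a.r (.inr k) (.inr l)) ∧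
  (¬ ∃ k : Fin n, k < i ∧ activeUp a k)

/-- The interface-graph adjacency of `a` after deleting the lower-vertex block `{i′,j′}`
and the upper-vertex block `{k,l}`. -/
def redEdge {n : ℕ} (a : PElt n) (i j k l : Fin n) (u v : Fin n) : Prop :=
  (LowEdge a u v ∧ ({u, v} : Set (Fin n)) ≠ {k, l}) ∨
  (UpEdge a u v ∧ ({u, v} : Set (Fin n)) ≠ {i, j})

/-- The relation generating the `θ`-cover `a − (e′,f)`, for `e′ = {i′,j′}` and
`f = {k,l}`: delete the two blocks, and join each freed upper vertex to the freed lower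
vertex reached along its path. -/
def coverRel {n : ℕ} (a : PElt n) (i j k l : Fin n) (x y : PV n) : Prop :=
  (a.r x y ∧ ({x, y} : Set (PV n)) ≠ {.inl k, .inl l} ∧
    ({x, y} : Set (PV n)) ≠ {.inr i, .inr j}) ∨
  (∃ u v : Fin n, u ∈ ({k, l} : Set (Fin n)) ∧ v ∈ ({i, j} : Set (Fin n)) ∧
    EqvGen (redEdge a i j k l) u v ∧
    ((x = .inl u ∧ y = .inr v) ∨ (x = .inr v ∧ y = .inl u)))

/-- The `θ`-cover `a − (e′,f)` as a partition. -/
def coverElt {n : ℕ} (a : PElt n) (i j k l : Fin n) : PElt n :=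
  EqvGen.setoid (coverRel a i j k l)

/-- `b` is a `θ`-cover of `a`: `θ ∈ Θ(a)` and `b = a − (e′,f)` for some special pair
`(e′,f)` over `θ` (one lower-return and one upper-return edge of `θ`). -/
def IsThetaCover {n : ℕ} (a : PElt n) (θ : Set (Fin n)) (b : PElt n) : Prop :=
  θ ∈ ThetaSet a ∧
  ∃ i j k l : Fin n, i ∈ θ ∧ j ∈ θ ∧ k ∈ θ ∧ l ∈ θ ∧
    LowerReturn a i j ∧ UpperReturn a k l ∧ b = coverElt a i j k l

/-- `a ≪_d b`: `a = b` or there is a chain of `θ`-covers from `a` to `b` along pairwise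
distinct cycles `θ ∈ Θ(d)`. -/
def llRel {n : ℕ} (d : PElt n) (a b : PElt n) : Prop :=
  a = b ∨ ∃ (h : ℕ) (θs : Fin h → Set (Fin n)) (as : Fin (h + 1) → PElt n),
    Function.Injective θs ∧ (∀ ι, θs ι ∈ ThetaSet d) ∧
    as 0 = a ∧ as (Fin.last h) = b ∧
    ∀ ι : Fin h, IsThetaCover (as ι.castSucc) (θs ι) (as ι.succ)

/-- The fibre `F_d = {α ∈ E(S) : α̂ = d}`. -/
def Fib {n : ℕ} (S : Set (PElt n)) (d : PElt n) : Set (PElt n) :=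
  {a ∈ Eset S | hat a = d}

/-- `C_d(θ) = C*_d(θ) ∪ {d}`, where `C*_d(θ)` is the set of `θ`-covers of `d`. -/
def CoverSet {n : ℕ} (d : PElt n) (θ : Set (Fin n)) : Set (PElt n) :=
  insert d {b | IsThetaCover d θ b}

/-- `u_θ`: the number of upper-return blocks among the edges of `θ`. -/
noncomputable def uRet {n : ℕ} (a : PElt n) (θ : Set (Fin n)) : ℕ :=
  Nat.card {p : Fin n × Fin n // p.1 ∈ θ ∧ p.2 ∈ θ ∧ UpperReturn a p.1 p.2}

/-- `l_θ`: the number of lower-return blocks among the edges of `θ`. -/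
noncomputable def lRet {n : ℕ} (a : PElt n) (θ : Set (Fin n)) : ℕ :=
  Nat.card {p : Fin n × Fin n // p.1 ∈ θ ∧ p.2 ∈ θ ∧ LowerReturn a p.1 p.2}

/-! ### Twisted semigroup algebras -/

variable {K : Type} [Field K]

/-- The underlying vector space of the semigroup algebra `k[P_n]`. -/
abbrev PAlg (n : ℕ) (K : Type) [Field K] := PElt n →₀ K

/-- The twisted multiplication on `k[P_n]`: on basis elements,
`a ∘ b = ξ^{m(a,b)} · (ab)`, extended bilinearly. -/
noncomputable def twistMul {n : ℕ} (ξ : K) (f g : PAlg n K) : PAlg n K :=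
  f.sum fun a ca => g.sum fun b cb =>
    Finsupp.single (pmul a b) (ca * cb * ξ ^ floatCount a b)

/-- The twisted variant `S^ξ`: the subsemigroup of `(k[S], ∘)` generated by (the basis
elements corresponding to) `S`. -/
def TwistedVariant {n : ℕ} (ξ : K) (S : Set (PElt n)) : Set (PAlg n K) :=
  ⋂₀ {T : Set (PAlg n K) | (∀ a ∈ S, Finsupp.single a (1 : K) ∈ T) ∧
      ∀ f ∈ T, ∀ g ∈ T, twistMul ξ f g ∈ T}

/-- The idempotents of a set of elements of the twisted algebra. -/
def EsetTwist {n : ℕ} (ξ : K) (X : Set (PAlg n K)) : Set (PAlg n K) :=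
  {f ∈ X | twistMul ξ f f = f}

/-- `⟨S^ξ, ξ·1⟩ = {ξ^i·α : i ∈ ℕ, α ∈ S}`. -/
def TwistNat {n : ℕ} (ξ : K) (S : Set (PElt n)) : Set (PAlg n K) :=
  {f | ∃ (i : ℕ), ∃ a ∈ S, f = Finsupp.single a (ξ ^ i)}

/-- `⟨S^ξ, ξ·1, ξ⁻¹·1⟩ = {ξ^i·α : i ∈ ℤ, α ∈ S}`. -/
def TwistInt {n : ℕ} (ξ : K) (S : Set (PElt n)) : Set (PAlg n K) :=
  {f | ∃ (i : ℤ), ∃ a ∈ S, f = Finsupp.single a (ξ ^ i)}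

/-! ### Idempotent statistics of the Jones monoid -/

/-- The number of cycle components of `Γ(a)`. -/
noncomputable def numCycles {n : ℕ} (a : PElt n) : ℕ :=
  Nat.card {θ : Set (Fin n) // IsCycleComp a θ}

/-- The number of path components of `Γ(a)`. -/
noncomputable def numPaths {n : ℕ} (a : PElt n) : ℕ :=
  Nat.card {θ : Set (Fin n) // IsPathComp a θ}

/-- `E_{n;c,p}`: the idempotents of the Jones monoid `J_n` with `c` cycle components and
`p` path components (out-of-range indices give the empty set). -/
def EJcp (n : ℕ) (c p : ℤ) : Set (PElt n) :=
  {a ∈ Jones n | pmul a a = a ∧ (numCycles a : ℤ) = c ∧ (numPaths a : ℤ) = p}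

/-- `e_{n;c,p} = |E_{n;c,p}|`. -/
noncomputable def eJ (n : ℕ) (c p : ℤ) : ℕ := Nat.card (EJcp n c p)

/-- `e_{n;·,p} = Σ_c e_{n;c,p}`: the number of idempotents of `J_n` of rank `p`. -/
noncomputable def eJdot (n : ℕ) (p : ℤ) : ℕ :=
  Nat.card {a : PElt n | a ∈ Jones n ∧ pmul a a = a ∧ (numPaths a : ℤ) = p}

/-- `S^{(1)}_{n;c,p} = Σ_{α ∈ E_{n;c,p}} Σ_{θ ∈ Θ(α)} (u_θ + l_θ)`. -/
noncomputable def S1 (n : ℕ) (c p : ℤ) : ℕ :=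
  ∑ᶠ a ∈ EJcp n c p, ∑ᶠ θ ∈ ThetaSet a, (uRet a θ + lRet a θ)

/-- `S^{(2)}_{n;c,p} = Σ_{α ∈ E_{n;c,p}} Σ_{θ₁ ≠ θ₂ ∈ Θ(α)} u_{θ₁}·l_{θ₂}`
(the inner sum over ordered pairs of distinct cycles). -/
noncomputable def S2 (n : ℕ) (c p : ℤ) : ℕ :=
  ∑ᶠ a ∈ EJcp n c p, ∑ᶠ q ∈ {q : Set (Fin n) × Set (Fin n) |
      q.1 ∈ ThetaSet a ∧ q.2 ∈ ThetaSet a ∧ q.1 ≠ q.2}, uRet a q.1 * lRet a q.2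

/-- `S^{(1)}_{n;·,p}`. -/
noncomputable def S1dot (n : ℕ) (p : ℤ) : ℕ :=
  ∑ᶠ a ∈ {a : PElt n | a ∈ Jones n ∧ pmul a a = a ∧ (numPaths a : ℤ) = p},
    ∑ᶠ θ ∈ ThetaSet a, (uRet a θ + lRet a θ)

/-- `S^{(2)}_{n;·,p}`. -/
noncomputable def S2dot (n : ℕ) (p : ℤ) : ℕ :=
  ∑ᶠ a ∈ {a : PElt n | a ∈ Jones n ∧ pmul a a = a ∧ (numPaths a : ℤ) = p},
    ∑ᶠ q ∈ {q : Set (Fin n) × Set (Fin n) |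
      q.1 ∈ ThetaSet a ∧ q.2 ∈ ThetaSet a ∧ q.1 ≠ q.2}, uRet a q.1 * lRet a q.2

section MotzkinHelpers

variable {n : ℕ}

lemma mz_block {a : PElt n} (h : ∀ x : PV n, blockCard a x ≤ 2) {x y z : PV n}
    (hy : a.r x y) (hz : a.r x z) (nxy : x ≠ y) (nxz : x ≠ z) : y = z := by
  by_contra hyz
  have h3 : ({x, y, z} : Set (PV n)).ncard = 3 :=
    Set.ncard_eq_three.2 ⟨x, y, z, nxy, nxz, hyz, rfl⟩
  have hsub : ({x, y, z} : Set (PV n)) ⊆ {y | a.r x y} := by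
    rintro w (rfl | rfl | rfl)
    · exact a.iseqv.refl _
    · exact hy
    · exact hz
  have := Set.ncard_le_ncard hsub (Set.toFinite _)
  have h2 := h x
  unfold blockCard at h2
  rw [← Nat.card_coe_set_eq {y | a.r x y}] at this
  have h4 : Nat.card ({y | a.r x y} : Set (PV n)) ≤ 2 := h2
  omega

/-- A finite set perfectly matched by a functional symmetric irreflexive relation is even. -/
lemma mz_even (E : Fin n → Fin n → Prop) (hsymm : ∀ i j, E i j → E j i)
    (hirr : ∀ i, ¬ E i i) (hfun : ∀ i j k, E i j → E i k → j = k)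
    (T : Finset (Fin n)) (hT : ∀ v ∈ T, ∃ w ∈ T, E v w) : Even T.card := by
  choose g hg hE using hT
  have h : ∑ v ∈ T, (1 : ZMod 2) = 0 := by
    refine Finset.sum_involution (fun v hv => g v hv) ?_ ?_ ?_ ?_
    · intro v hv; decide
    · intro v hv _ heq
      have := hE v hv
      rw [heq] at this
      exact hirr _ this
    · intro v hv; exact hg v hv
    · intro v hv
      exact hfun _ _ _ (hE _ (hg v hv)) (hsymm _ _ (hE v hv))
  rw [Finset.sum_const, nsmul_eq_mul, mul_one] at h
  exact (ZMod.natCast_eq_zero_iff_even).1 h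

open Classical in
/-- Number of elements of `γ` to the left of `i`. -/
noncomputable def mzCnt (γ : Set (Fin n)) (i : Fin n) : ℕ :=
  (Finset.univ.filter (fun v => v ∈ γ ∧ v < i)).card

/-- One side of the interface: edges and active vertices. -/
structure MzSide (E : Fin n → Fin n → Prop) (act : Fin n → Prop) : Prop where
  symm : ∀ i j, E i j → E j i
  irr : ∀ i, ¬ E i i
  func : ∀ i j k, E i j → E i k → j = k
  noact : ∀ i v j, E i j → i < v → v < j → ¬ act v
  actfree : ∀ i j, act i → ¬ E i j
  nocross : ∀ i v j w, E i j → i < v → v < j → E v w → i ≤ w ∧ w ≤ j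

/-- `γ` is closed under `E`, with a unique free vertex `q`, which is active. -/
structure MzPath (E : Fin n → Fin n → Prop) (act : Fin n → Prop) (γ : Set (Fin n))
    (q : Fin n) : Prop where
  closed : ∀ i j, i ∈ γ → E i j → j ∈ γ
  mem : q ∈ γ
  free : ∀ i ∈ γ, i ≠ q → ∃ j, E i j
  act : act q

lemma mz_parity_edge {E : Fin n → Fin n → Prop} {act : Fin n → Prop} (hs : MzSide E act)
    {γ : Set (Fin n)} {q : Fin n} (hp : MzPath E act γ q) {i j : Fin n} (hE : E i j)
    (hi : i ∉ γ) : mzCnt γ i % 2 = mzCnt γ j % 2 := by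
  classical
  wlog hij : i < j generalizing i j
  · have hne : i ≠ j := fun h => hs.irr i (by rw [← h] at hE; exact hE)
    have hj : j ∉ γ := fun h => hi (hp.closed j i h (hs.symm _ _ hE))
    exact (this (hs.symm _ _ hE) hj (lt_of_le_of_ne (not_lt.1 hij) hne.symm)).symm
  have hj : j ∉ γ := fun h => hi (hp.closed j i h (hs.symm _ _ hE))
  have hev := mz_even E hs.symm hs.irr hs.func
    (Finset.univ.filter (fun v => v ∈ γ ∧ i < v ∧ v < j)) (by
      intro v hv
      simp only [Finset.mem_filter, Finset.mem_univ, true_and] at hv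
      obtain ⟨hvγ, h1, h2⟩ := hv
      have hvq : v ≠ q := fun h => hs.noact i v j hE h1 h2 (h ▸ hp.act)
      obtain ⟨w, hw⟩ := hp.free v hvγ hvq
      have hwγ := hp.closed _ _ hvγ hw
      obtain ⟨h3, h4⟩ := hs.nocross i v j w hE h1 h2 hw
      refine ⟨w, ?_, hw⟩
      simp only [Finset.mem_filter, Finset.mem_univ, true_and]
      exact ⟨hwγ, lt_of_le_of_ne h3 (fun h => hi (h ▸ hwγ)),
        lt_of_le_of_ne h4 (fun h => hj (h ▸ hwγ))⟩)
  have hsplit : Finset.univ.filter (fun v => v ∈ γ ∧ v < j) =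
      (Finset.univ.filter (fun v => v ∈ γ ∧ v < i)) ∪
      (Finset.univ.filter (fun v => v ∈ γ ∧ i < v ∧ v < j)) := by
    ext v
    simp only [Finset.mem_filter, Finset.mem_univ, true_and, Finset.mem_union]
    constructor
    · rintro ⟨h1, h2⟩
      rcases lt_trichotomy v i with h | h | h
      · exact Or.inl ⟨h1, h⟩
      · exact absurd (h ▸ h1) hi
      · exact Or.inr ⟨h1, h, h2⟩
    · rintro (⟨h1, h2⟩ | ⟨h1, _, h2⟩)
      · exact ⟨h1, h2.trans hij⟩
      · exact ⟨h1, h2⟩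
  have hdis : Disjoint (Finset.univ.filter (fun v => v ∈ γ ∧ v < i))
      (Finset.univ.filter (fun v => v ∈ γ ∧ i < v ∧ v < j)) := by
    rw [Finset.disjoint_left]
    intro v hv hv'
    simp only [Finset.mem_filter, Finset.mem_univ, true_and] at hv hv'
    exact absurd hv.2 (not_lt.2 hv'.2.1.le)
  have hc : mzCnt γ j = mzCnt γ i +
      (Finset.univ.filter (fun v => v ∈ γ ∧ i < v ∧ v < j)).card := by
    unfold mzCnt
    rw [← Finset.card_union_of_disjoint hdis, ← hsplit]
  rw [hc]
  obtain ⟨m, hm⟩ := hev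
  omega

lemma mz_parity_end {E : Fin n → Fin n → Prop} {act : Fin n → Prop} (hs : MzSide E act)
    {γ : Set (Fin n)} {q : Fin n} (hp : MzPath E act γ q) {r : Fin n} (hr : act r)
    (hrγ : r ∉ γ) : mzCnt γ r % 2 = 1 ↔ q < r := by
  classical
  have hev := mz_even E hs.symm hs.irr hs.func
    ((Finset.univ.filter (fun v => v ∈ γ ∧ v < r)).erase q) (by
      intro v hv
      simp only [Finset.mem_erase, Finset.mem_filter, Finset.mem_univ, true_and] at hv
      obtain ⟨hvq, hvγ, h1⟩ := hv
      obtain ⟨w, hw⟩ := hp.free v hvγ hvq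
      have hwγ := hp.closed _ _ hvγ hw
      have hwr : w < r := by
        rcases lt_trichotomy w r with h | h | h
        · exact h
        · exact absurd (h ▸ hwγ) hrγ
        · exact absurd hr (hs.noact v r w hw h1 h)
      refine ⟨w, ?_, hw⟩
      simp only [Finset.mem_erase, Finset.mem_filter, Finset.mem_univ, true_and]
      refine ⟨?_, hwγ, hwr⟩
      rintro rfl
      exact hs.actfree _ _ hp.act (hs.symm _ _ hw))
  unfold mzCnt
  obtain ⟨m, hm⟩ := hev
  by_cases hq : q < r
  · have : q ∈ Finset.univ.filter (fun v => v ∈ γ ∧ v < r) := by simp [hp.mem, hq]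
    have := Finset.card_erase_add_one this
    simp only [hq, iff_true]
    omega
  · have : q ∉ Finset.univ.filter (fun v => v ∈ γ ∧ v < r) := by simp [hq]
    rw [Finset.erase_eq_of_notMem this] at hm
    simp only [hq, iff_false]
    omega


lemma mz_low_irr (a : PElt n) (i : Fin n) : ¬ LowEdge a i i := fun h => h.1 rfl

lemma mz_low_symm (a : PElt n) (i j : Fin n) (h : LowEdge a i j) : LowEdge a j i :=
  ⟨h.1.symm, a.iseqv.symm h.2⟩

lemma mz_up_symm (a : PElt n) (i j : Fin n) (h : UpEdge a i j) : UpEdge a j i :=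
  ⟨h.1.symm, a.iseqv.symm h.2⟩

lemma mz_low_fun {a : PElt n} (hb : ∀ x : PV n, blockCard a x ≤ 2) (i j k : Fin n)
    (h : LowEdge a i j) (h' : LowEdge a i k) : j = k :=
  Sum.inl_injective (mz_block hb h.2 h'.2 (fun e => h.1 (Sum.inl_injective e))
    (fun e => h'.1 (Sum.inl_injective e)))

lemma mz_up_fun {a : PElt n} (hb : ∀ x : PV n, blockCard a x ≤ 2) (i j k : Fin n)
    (h : UpEdge a i j) (h' : UpEdge a i k) : j = k :=
  Sum.inr_injective (mz_block hb h.2 h'.2 (fun e => h.1 (Sum.inr_injective e))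
    (fun e => h'.1 (Sum.inr_injective e)))

lemma mz_actDown_free {a : PElt n} (hb : ∀ x : PV n, blockCard a x ≤ 2) (i j : Fin n)
    (h : activeDown a i) : ¬ LowEdge a i j := by
  obtain ⟨k, hk⟩ := h
  intro h
  have := mz_block hb h.2 hk (fun e => h.1 (Sum.inl_injective e)) (by simp)
  simp at this

lemma mz_actUp_free {a : PElt n} (hb : ∀ x : PV n, blockCard a x ≤ 2) (i j : Fin n)
    (h : activeUp a i) : ¬ UpEdge a i j := by
  obtain ⟨k, hk⟩ := h
  intro h
  have := mz_block hb h.2 hk (fun e => h.1 (Sum.inr_injective e)) (by simp)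
  simp at this

lemma mz_side_low {a : PElt n} (hpl : IsPlanar a) (hb : ∀ x : PV n, blockCard a x ≤ 2) :
    MzSide (LowEdge a) (activeDown a) where
  symm := mz_low_symm a
  irr := mz_low_irr a
  func := mz_low_fun hb
  actfree := mz_actDown_free hb
  noact := by
    intro i v j hE h1 h2 hact
    obtain ⟨k, hk⟩ := hact
    refine hpl ⟨.inl i, .inl v, .inl j, .inr k, ?_, ?_, ?_, hE.2, hk, ?_⟩
    · exact h1
    · exact h2
    · have := k.2; have := j.2; simp only [ordIdx]; omega
    · intro h
      have := mz_low_fun hb i j v hE ⟨h1.ne, h⟩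
      exact h2.ne this.symm
  nocross := by
    intro i v j w hE h1 h2 hw
    have hiv : ¬ a.r (.inl i) (.inl v) := fun h =>
      h2.ne (mz_low_fun hb i j v hE ⟨h1.ne, h⟩).symm
    by_contra hcon
    rw [not_and_or, not_le, not_le] at hcon
    rcases hcon with h | h
    · refine hpl ⟨.inl w, .inl i, .inl v, .inl j, h, h1, h2, a.iseqv.symm hw.2, hE.2, ?_⟩
      intro h'
      exact hiv (a.iseqv.trans (a.iseqv.symm h') (a.iseqv.symm hw.2))
    · exact hpl ⟨.inl i, .inl v, .inl j, .inl w, h1, h2, h, hE.2, hw.2, hiv⟩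

lemma mz_ord_inr {i j : Fin n} (h : i < j) : ordIdx n (.inr j) < ordIdx n (.inr i) := by
  have := i.2; have := j.2
  have : i.val < j.val := h
  simp only [ordIdx]; omega

lemma mz_side_up {a : PElt n} (hpl : IsPlanar a) (hb : ∀ x : PV n, blockCard a x ≤ 2) :
    MzSide (UpEdge a) (activeUp a) where
  symm := mz_up_symm a
  irr := fun i h => h.1 rfl
  func := mz_up_fun hb
  actfree := mz_actUp_free hb
  noact := by
    intro i v j hE h1 h2 hact
    obtain ⟨k, hk⟩ := hact
    refine hpl ⟨.inl k, .inr j, .inr v, .inr i, ?_, mz_ord_inr h2, mz_ord_inr h1,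
      a.iseqv.symm hk, a.iseqv.symm hE.2, ?_⟩
    · have := k.2; have := j.2; simp only [ordIdx]; omega
    · intro h
      have h3 : a.r (.inr j) (.inr v) := a.iseqv.trans (a.iseqv.symm h) (a.iseqv.symm hk)
      have := mz_up_fun hb j i v (mz_up_symm a _ _ hE) ⟨h2.ne', h3⟩
      exact h1.ne this
  nocross := by
    intro i v j w hE h1 h2 hw
    have hjv : ¬ a.r (.inr j) (.inr v) := fun h =>
      h1.ne (mz_up_fun hb j i v (mz_up_symm a _ _ hE) ⟨h2.ne', h⟩)
    by_contra hcon
    rw [not_and_or, not_le, not_le] at hcon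
    rcases hcon with h | h
    · exact hpl ⟨.inr j, .inr v, .inr i, .inr w, mz_ord_inr h2, mz_ord_inr h1, mz_ord_inr h,
        a.iseqv.symm hE.2, hw.2, hjv⟩
    · refine hpl ⟨.inr w, .inr j, .inr v, .inr i, mz_ord_inr h, mz_ord_inr h2, mz_ord_inr h1,
        a.iseqv.symm hw.2, a.iseqv.symm hE.2, ?_⟩
      intro h'
      exact hjv (a.iseqv.trans (a.iseqv.symm h') (a.iseqv.symm hw.2))

lemma mz_trans_mono {a : PElt n} (hpl : IsPlanar a) (hb : ∀ x : PV n, blockCard a x ≤ 2)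
    {p q p' q' : Fin n} (h : a.r (.inl p) (.inr q)) (h' : a.r (.inl p') (.inr q'))
    (hlt : p < p') : q < q' := by
  have hn : ¬ a.r (.inl p) (.inl p') := fun e => mz_actDown_free hb p p' ⟨q, h⟩ ⟨hlt.ne, e⟩
  rcases lt_trichotomy q q' with e | e | e
  · exact e
  · subst e
    exact absurd (a.iseqv.trans h (a.iseqv.symm h')) hn
  · exfalso
    refine hpl ⟨.inl p, .inl p', .inr q, .inr q', hlt, ?_, mz_ord_inr e, h, h', hn⟩
    have := p'.2; have := q.2; simp only [ordIdx]; omega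

lemma mz_comp (a : PElt n) (i : Fin n) : IsComp a {j | gconn a i j} :=
  ⟨⟨i, EqvGen.refl i⟩, fun j hj k =>
    ⟨fun h => EqvGen.trans _ _ _ hj h, fun h => EqvGen.trans _ _ _ (EqvGen.symm _ _ hj) h⟩⟩

/-- The component of an upward active vertex is trans-active. -/
lemma mz_good_up {a : PElt n} (hb : ∀ x : PV n, blockCard a x ≤ 2)
    (H : ∀ θ : Set (Fin n), IsComp a θ →
      IsCycleComp a θ ∨ IsInertPathComp a θ ∨ IsTransActivePathComp a θ)
    {q : Fin n} (hq : activeUp a q) : IsTransActivePathComp a {j | gconn a q j} := by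
  have hmem : q ∈ {j | gconn a q j} := EqvGen.refl q
  have hfree : ¬ hasUp a q := fun ⟨j, hj⟩ => mz_actUp_free hb q j hq hj
  rcases H _ (mz_comp a q) with h | h | h
  · exact absurd (h.2 q hmem).2 hfree
  · have := (h.2 q hmem).2 hfree
    obtain ⟨k, hk⟩ := hq
    simpa using this _ hk
  · exact h

lemma mz_uniq_up {a : PElt n} (hb : ∀ x : PV n, blockCard a x ≤ 2)
    (H : ∀ θ : Set (Fin n), IsComp a θ →
      IsCycleComp a θ ∨ IsInertPathComp a θ ∨ IsTransActivePathComp a θ)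
    {q r : Fin n} (hq : activeUp a q) (hr : activeUp a r) (hqr : gconn a q r) : q = r := by
  have h := (mz_good_up hb H hq).2.2.1
  exact h.unique ⟨EqvGen.refl q, fun ⟨j, hj⟩ => mz_actUp_free hb q j hq hj⟩
    ⟨hqr, fun ⟨j, hj⟩ => mz_actUp_free hb r j hr hj⟩

/-- Paths preserve the order of active ends. -/
lemma mz_path_mono {a : PElt n} (hpl : IsPlanar a) (hb : ∀ x : PV n, blockCard a x ≤ 2)
    (H : ∀ θ : Set (Fin n), IsComp a θ →
      IsCycleComp a θ ∨ IsInertPathComp a θ ∨ IsTransActivePathComp a θ)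
    {q p q' p' : Fin n} (hq : activeUp a q) (hq' : activeUp a q') (hp : activeDown a p)
    (hp' : activeDown a p') (hc : gconn a q p) (hc' : gconn a q' p') (hlt : q < q') :
    p < p' := by
  set γ : Set (Fin n) := {j | gconn a q j} with hγ
  have hT := mz_good_up hb H hq
  have hcl : ∀ i j, i ∈ γ → gedge a i j → j ∈ γ := fun i j hi he =>
    EqvGen.trans _ _ _ hi (EqvGen.rel _ _ he)
  have hup : MzPath (UpEdge a) (activeUp a) γ q := by
    refine ⟨fun i j hi he => hcl i j hi (Or.inr he), EqvGen.refl q, ?_, hq⟩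
    intro i hi hne
    by_contra hcon
    exact hne (hT.2.2.1.unique ⟨hi, hcon⟩
      ⟨EqvGen.refl q, fun ⟨j, hj⟩ => mz_actUp_free hb q j hq hj⟩)
  have hlow : MzPath (LowEdge a) (activeDown a) γ p := by
    refine ⟨fun i j hi he => hcl i j hi (Or.inl he), hc, ?_, hp⟩
    intro i hi hne
    by_contra hcon
    exact hne (hT.2.1.unique ⟨hi, hcon⟩
      ⟨hc, fun ⟨j, hj⟩ => mz_actDown_free hb p j hp hj⟩)
  have hq'γ : q' ∉ γ := fun h => hlt.ne (mz_uniq_up hb H hq hq' h)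
  have hstep : ∀ i j, EqvGen (gedge a) i j →
      (i ∈ γ ↔ j ∈ γ) ∧ (i ∉ γ → mzCnt γ i % 2 = mzCnt γ j % 2) := by
    intro i j hij
    induction hij with
    | rel x y h =>
      refine ⟨⟨fun hx => hcl _ _ hx h, fun hy => ?_⟩, ?_⟩
      · exact EqvGen.trans _ _ _ hy (EqvGen.symm _ _ (EqvGen.rel _ _ h))
      · intro hx
        rcases h with h | h
        · exact mz_parity_edge (mz_side_low hpl hb) hlow h hx
        · exact mz_parity_edge (mz_side_up hpl hb) hup h hx
    | refl x => exact ⟨Iff.rfl, fun _ => rfl⟩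
    | symm x y _ ih => exact ⟨ih.1.symm, fun h => (ih.2 (fun h' => h (ih.1.1 h'))).symm⟩
    | trans x y z _ _ ih1 ih2 =>
      exact ⟨ih1.1.trans ih2.1,
        fun h => (ih1.2 h).trans (ih2.2 (fun h' => h (ih1.1.2 h')))⟩
  obtain ⟨hs1, hs2⟩ := hstep q' p' hc'
  have hp'γ : p' ∉ γ := fun h => hq'γ (hs1.2 h)
  rw [← mz_parity_end (mz_side_low hpl hb) hlow hp' hp'γ, ← hs2 hq'γ]
  exact (mz_parity_end (mz_side_up hpl hb) hup hq' hq'γ).2 hlt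

/-- Under the component condition, each transversal closes up along a path. -/
lemma mz_key {a : PElt n} (hpl : IsPlanar a) (hb : ∀ x : PV n, blockCard a x ≤ 2)
    (H : ∀ θ : Set (Fin n), IsComp a θ →
      IsCycleComp a θ ∨ IsInertPathComp a θ ∨ IsTransActivePathComp a θ)
    {p q : Fin n} (hpq : a.r (.inl p) (.inr q)) : gconn a q p := by
  have hex : ∀ q : {q : Fin n // activeUp a q}, ∃ p, gconn a q.1 p ∧ activeDown a p := by
    rintro ⟨q, hq⟩
    have hT := mz_good_up hb H hq
    obtain ⟨p, ⟨h1, h2⟩, -⟩ := hT.2.1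
    exact ⟨p, h1, (hT.2.2.2 p h1).1 h2⟩
  choose pp hpp hact using hex
  choose qq hqq using hact
  let f : {q : Fin n // activeUp a q} → {q : Fin n // activeUp a q} :=
    fun q => ⟨qq q, pp q, a.iseqv.symm (hqq q)⟩
  have hf : StrictMono f := by
    intro x y hxy
    have h1 : pp x < pp y :=
      mz_path_mono hpl hb H x.2 y.2 ⟨_, hqq x⟩ ⟨_, hqq y⟩ (hpp x) (hpp y) hxy
    exact mz_trans_mono hpl hb (hqq x) (hqq y) h1
  let x : {q : Fin n // activeUp a q} := ⟨q, p, a.iseqv.symm hpq⟩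
  have hfx : f x = x := le_antisymm (hf.apply_le) (hf.le_apply)
  have hqx : qq x = q := congrArg Subtype.val hfx
  have h2 := hqq x
  rw [hqx] at h2
  have h3 : a.r (.inl p) (.inl (pp x)) := a.iseqv.trans hpq (a.iseqv.symm h2)
  by_cases h4 : p = pp x
  · rw [h4]; exact hpp x
  · exact absurd ⟨h4, h3⟩ (mz_actDown_free hb p (pp x) ⟨q, hpq⟩)

lemma mz_mid_conn (a : PElt n) {i j : Fin n} (h : gconn a i j) :
    EqvGen (stackRel a a) (.inr (.inl i)) (.inr (.inl j)) := by
  induction h with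
  | rel x y h =>
    refine EqvGen.rel _ _ ?_
    rcases h with h | h
    · exact Or.inr ⟨.inl x, .inl y, h.2, rfl, rfl⟩
    · exact Or.inl ⟨.inr x, .inr y, h.2, rfl, rfl⟩
  | refl x => exact EqvGen.refl _
  | symm x y _ ih => exact EqvGen.symm _ _ ih
  | trans x y z _ _ ih1 ih2 => exact EqvGen.trans _ _ _ ih1 ih2

lemma mz_up_conn (a : PElt n) {x y : PV n} (h : a.r x y) :
    EqvGen (stackRel a a) (upEmb x) (upEmb y) :=
  EqvGen.rel _ _ (Or.inl ⟨x, y, h, rfl, rfl⟩)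

lemma mz_down_conn (a : PElt n) {x y : PV n} (h : a.r x y) :
    EqvGen (stackRel a a) (downEmb x) (downEmb y) :=
  EqvGen.rel _ _ (Or.inr ⟨x, y, h, rfl, rfl⟩)

lemma mz_gconn_low (a : PElt n) {i j : Fin n} (h : a.r (.inl i) (.inl j)) : gconn a i j := by
  by_cases e : i = j
  · subst e; exact EqvGen.refl _
  · exact EqvGen.rel _ _ (Or.inl ⟨e, h⟩)

lemma mz_gconn_up (a : PElt n) {i j : Fin n} (h : a.r (.inr i) (.inr j)) : gconn a i j := by
  by_cases e : i = j
  · subst e; exact EqvGen.refl _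
  · exact EqvGen.rel _ _ (Or.inr ⟨e, h⟩)

/-- Labels on the three layers, invariant under the stacked relation. -/
def mzLabel (a : PElt n) : TV n → PV n → Prop
  | .inl i => fun y => a.r (.inl i) y
  | .inr (.inl i) => fun y => ∃ q, gconn a i q ∧ activeUp a q ∧ a.r (.inr q) y
  | .inr (.inr i) => fun y => a.r (.inr i) y

lemma mz_class_eq (a : PElt n) {x y : PV n} (h : a.r x y) :
    (fun z => a.r x z) = (fun z => a.r y z) := by
  funext z
  exact propext ⟨fun h' => a.iseqv.trans (a.iseqv.symm h) h', fun h' => a.iseqv.trans h h'⟩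

lemma mz_label_mid (a : PElt n) {i j : Fin n} (h : gconn a i j) :
    mzLabel a (.inr (.inl i)) = mzLabel a (.inr (.inl j)) := by
  funext z
  refine propext ⟨?_, ?_⟩
  · rintro ⟨q, h1, h2⟩
    exact ⟨q, EqvGen.trans _ _ _ (EqvGen.symm _ _ h) h1, h2⟩
  · rintro ⟨q, h1, h2⟩
    exact ⟨q, EqvGen.trans _ _ _ h h1, h2⟩

lemma mz_label_step {a : PElt n} (hpl : IsPlanar a) (hb : ∀ x : PV n, blockCard a x ≤ 2)
    (H : ∀ θ : Set (Fin n), IsComp a θ →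
      IsCycleComp a θ ∨ IsInertPathComp a θ ∨ IsTransActivePathComp a θ)
    {x y : TV n} (h : stackRel a a x y) : mzLabel a x = mzLabel a y := by
  have hq : ∀ q, activeUp a q → mzLabel a (.inr (.inl q)) = fun z => a.r (.inr q) z := by
    intro q hq
    funext z
    refine propext ⟨?_, fun h => ⟨q, EqvGen.refl q, hq, h⟩⟩
    rintro ⟨r, h1, h2, h3⟩
    rw [mz_uniq_up hb H hq h2 h1]
    exact h3
  have h1 : ∀ i j, a.r (.inl i) (.inr j) →
      mzLabel a (.inl i) = mzLabel a (.inr (.inl j)) := by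
    intro i j h
    rw [hq j ⟨i, a.iseqv.symm h⟩]
    exact mz_class_eq a h
  have h2 : ∀ i j, a.r (.inl i) (.inr j) →
      mzLabel a (.inr (.inl i)) = mzLabel a (.inr (.inr j)) := by
    intro i j h
    rw [← mz_label_mid a (mz_key hpl hb H h), hq j ⟨i, a.iseqv.symm h⟩]
    rfl
  rcases h with ⟨p | p, q | q, h, rfl, rfl⟩ | ⟨p | p, q | q, h, rfl, rfl⟩
  · exact mz_class_eq a h
  · exact h1 _ _ h
  · exact (h1 _ _ (a.iseqv.symm h)).symm
  · exact mz_label_mid a (mz_gconn_up a h)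
  · exact mz_label_mid a (mz_gconn_low a h)
  · exact h2 _ _ h
  · exact (h2 _ _ (a.iseqv.symm h)).symm
  · exact mz_class_eq a h

lemma mz_backward {a : PElt n} (hpl : IsPlanar a) (hb : ∀ x : PV n, blockCard a x ≤ 2)
    (H : ∀ θ : Set (Fin n), IsComp a θ →
      IsCycleComp a θ ∨ IsInertPathComp a θ ∨ IsTransActivePathComp a θ) :
    pmul a a = a := by
  have ht : ∀ i j, a.r (.inl i) (.inr j) →
      EqvGen (stackRel a a) (.inl i) (.inr (.inr j)) := by
    intro i j h
    exact EqvGen.trans _ _ _ (mz_up_conn a h)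
      (EqvGen.trans _ _ _ (mz_mid_conn a (mz_key hpl hb H h)) (mz_down_conn a h))
  have hlab : ∀ x y, EqvGen (stackRel a a) x y → mzLabel a x = mzLabel a y := by
    intro x y h
    induction h with
    | rel x y h => exact mz_label_step hpl hb H h
    | refl x => rfl
    | symm x y _ ih => exact ih.symm
    | trans x y z _ _ ih1 ih2 => exact ih1.trans ih2
  have hout : ∀ x : PV n, mzLabel a (outEmb x) = fun z => a.r x z := by
    rintro (x | x) <;> rfl
  refine Setoid.ext fun x y => ⟨?_, ?_⟩
  · intro h
    have h' : EqvGen (stackRel a a) (outEmb x) (outEmb y) := h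
    have := hlab _ _ h'
    rw [hout, hout] at this
    have h2 : a.r x y = a.r y y := congrFun this y
    exact h2.mpr (a.iseqv.refl y)
  · intro h
    have h' : a.r x y := h
    change EqvGen (stackRel a a) (outEmb x) (outEmb y)
    rcases x with x | x <;> rcases y with y | y
    · exact mz_up_conn a h'
    · exact ht _ _ h'
    · exact EqvGen.symm _ _ (ht _ _ (a.iseqv.symm h'))
    · exact mz_down_conn a h'

/-! Forward direction -/

/-- The part of the three layers attached to the component of `q` in the idempotent case. -/
def mzT (a : PElt n) (p q : Fin n) : TV n → Prop
  | .inl j => a.r (.inl p) (.inl j)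
  | .inr (.inl i) => gconn a q i
  | .inr (.inr j) => ∃ k, gconn a q k ∧ a.r (.inl k) (.inr j)

lemma mz_fwd_key {a : PElt n} (hid : pmul a a = a) {p q : Fin n}
    (hpq : a.r (.inl p) (.inr q)) (hb : ∀ x : PV n, blockCard a x ≤ 2) : gconn a q p := by
  have hout : ∀ x y : PV n, a.r x y ↔ EqvGen (stackRel a a) (outEmb x) (outEmb y) := by
    intro x y
    conv_lhs => rw [← hid]
    rfl
  have h1 : ∀ j i, a.r (.inl j) (.inr i) → (mzT a p q (.inl j) ↔ mzT a p q (.inr (.inl i))) := by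
    intro j i h
    constructor
    · intro hj
      have hj' : a.r (.inl p) (.inl j) := hj
      exact mz_gconn_up a (a.iseqv.trans (a.iseqv.symm hpq) (a.iseqv.trans hj' h))
    · intro hi
      exact (hout (.inl p) (.inl j)).2 (EqvGen.trans _ _ _ (mz_up_conn a hpq)
        (EqvGen.trans _ _ _ (mz_mid_conn a hi) (mz_up_conn a (a.iseqv.symm h))))
  have h2 : ∀ i j, a.r (.inl i) (.inr j) →
      (mzT a p q (.inr (.inl i)) ↔ mzT a p q (.inr (.inr j))) := by
    intro i j h
    constructor
    · intro hi
      exact ⟨i, hi, h⟩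
    · rintro ⟨k, hk, hkj⟩
      exact EqvGen.trans _ _ _ hk (mz_gconn_low a (a.iseqv.trans hkj (a.iseqv.symm h)))
  have h3 : ∀ i j, gconn a i j → (mzT a p q (.inr (.inl i)) ↔ mzT a p q (.inr (.inl j))) :=
    fun i j h => ⟨fun h' => EqvGen.trans _ _ _ h' h,
      fun h' => EqvGen.trans _ _ _ h' (EqvGen.symm _ _ h)⟩
  have hstep : ∀ x y, stackRel a a x y → (mzT a p q x ↔ mzT a p q y) := by
    intro x y h
    rcases h with ⟨u | u, v | v, h, rfl, rfl⟩ | ⟨u | u, v | v, h, rfl, rfl⟩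
    · exact ⟨fun h' => a.iseqv.trans h' h, fun h' => a.iseqv.trans h' (a.iseqv.symm h)⟩
    · exact h1 _ _ h
    · exact (h1 _ _ (a.iseqv.symm h)).symm
    · exact h3 _ _ (mz_gconn_up a h)
    · exact h3 _ _ (mz_gconn_low a h)
    · exact h2 _ _ h
    · exact (h2 _ _ (a.iseqv.symm h)).symm
    · exact ⟨fun ⟨k, hk, hkj⟩ => ⟨k, hk, a.iseqv.trans hkj h⟩,
        fun ⟨k, hk, hkj⟩ => ⟨k, hk, a.iseqv.trans hkj (a.iseqv.symm h)⟩⟩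
  have hall : ∀ x y, EqvGen (stackRel a a) x y → (mzT a p q x ↔ mzT a p q y) := by
    intro x y h
    induction h with
    | rel x y h => exact hstep x y h
    | refl x => exact Iff.rfl
    | symm x y _ ih => exact ih.symm
    | trans x y z _ _ ih1 ih2 => exact ih1.trans ih2
  obtain ⟨k, hk, hkq⟩ := (hall _ _ ((hout _ _).1 hpq)).1 (a.iseqv.refl (.inl p))
  exact EqvGen.trans _ _ _ hk (mz_gconn_low a (a.iseqv.trans hkq (a.iseqv.symm hpq)))

/-- Walking along a path: state `(v, true)` means that `v` was entered from above. -/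
def mzStep (a : PElt n) (s t : Fin n × Bool) : Prop :=
  (s.2 = true ∧ t.2 = false ∧ LowEdge a s.1 t.1) ∨
  (s.2 = false ∧ t.2 = true ∧ UpEdge a s.1 t.1)

lemma mz_step_unique {a : PElt n} (hb : ∀ x : PV n, blockCard a x ≤ 2) :
    Relator.RightUnique (mzStep a) := by
  rintro ⟨s, bs⟩ ⟨t, bt⟩ ⟨u, bu⟩ h1 h2
  rcases h1 with ⟨e1, e2, e3⟩ | ⟨e1, e2, e3⟩ <;> rcases h2 with ⟨f1, f2, f3⟩ | ⟨f1, f2, f3⟩ <;>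
    simp only at e1 e2 e3 f1 f2 f3
  · rw [e2, f2, mz_low_fun hb _ _ _ e3 f3]
  · rw [e1] at f1; cases f1
  · rw [e1] at f1; cases f1
  · rw [e2, f2, mz_up_fun hb _ _ _ e3 f3]

lemma mz_walk_cover {a : PElt n} (hb : ∀ x : PV n, blockCard a x ≤ 2) {q : Fin n}
    (hq : ¬ hasUp a q) {v : Fin n} (hv : gconn a q v) :
    ∃ b, ReflTransGen (mzStep a) (q, true) (v, b) := by
  have hstep : ∀ x y, gedge a x y → (∃ b, ReflTransGen (mzStep a) (q, true) (x, b)) →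
      ∃ b, ReflTransGen (mzStep a) (q, true) (y, b) := by
    rintro x y hxy ⟨b, hx⟩
    rcases hxy with h | h
    · cases b with
      | true => exact ⟨false, hx.tail (Or.inl ⟨rfl, rfl, h⟩)⟩
      | false =>
        rcases ReflTransGen.cases_tail hx with e | ⟨⟨w, bw⟩, hw, hs⟩
        · simp at e
        · rcases hs with ⟨e1, e2, e3⟩ | ⟨e1, e2, e3⟩
          · have : w = y := mz_low_fun hb x w y (mz_low_symm a _ _ e3) h
            subst this
            exact ⟨bw, hw⟩
          · simp at e2
    · cases b with
      | false => exact ⟨true, hx.tail (Or.inr ⟨rfl, rfl, h⟩)⟩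
      | true =>
        rcases ReflTransGen.cases_tail hx with e | ⟨⟨w, bw⟩, hw, hs⟩
        · simp only [Prod.mk.injEq, and_true] at e
          subst e
          exact absurd ⟨y, h⟩ hq
        · rcases hs with ⟨e1, e2, e3⟩ | ⟨e1, e2, e3⟩
          · simp at e2
          · have : w = y := mz_up_fun hb x w y (mz_up_symm a _ _ e3) h
            subst this
            exact ⟨bw, hw⟩
  have hsymm : ∀ x y, gedge a x y → gedge a y x := by
    rintro x y (h | h)
    · exact Or.inl (mz_low_symm a _ _ h)
    · exact Or.inr (mz_up_symm a _ _ h)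
  have hall : ∀ x y, EqvGen (gedge a) x y →
      ((∃ b, ReflTransGen (mzStep a) (q, true) (x, b)) ↔
        ∃ b, ReflTransGen (mzStep a) (q, true) (y, b)) := by
    intro x y h
    induction h with
    | rel x y h => exact ⟨hstep x y h, hstep y x (hsymm x y h)⟩
    | refl x => exact Iff.rfl
    | symm x y _ ih => exact ih.symm
    | trans x y z _ _ ih1 ih2 => exact ih1.trans ih2
  exact (hall q v hv).1 ⟨true, ReflTransGen.refl⟩

lemma mz_stuck {a : PElt n} {s t : Fin n × Bool} (h : ReflTransGen (mzStep a) s t)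
    (hs : ∀ u, ¬ mzStep a s u) : s = t := by
  rcases ReflTransGen.cases_head h with e | ⟨u, hu, -⟩
  · exact e
  · exact absurd hu (hs u)

lemma mz_path_ends {a : PElt n} (hb : ∀ x : PV n, blockCard a x ≤ 2) {p q : Fin n}
    (hq : ¬ hasUp a q) (hp : ¬ hasLow a p) (hqp : gconn a q p) {v : Fin n}
    (hv : gconn a q v) : (¬ hasUp a v → v = q) ∧ (¬ hasLow a v → v = p) := by
  have hlowin : ∀ x, ReflTransGen (mzStep a) (q, true) (x, false) → hasLow a x := by
    intro x hx
    rcases ReflTransGen.cases_tail hx with e | ⟨⟨w, bw⟩, hw, hs⟩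
    · simp at e
    · rcases hs with ⟨e1, e2, e3⟩ | ⟨e1, e2, e3⟩
      · exact ⟨w, mz_low_symm a _ _ e3⟩
      · simp at e2
  have hupin : ∀ x, ReflTransGen (mzStep a) (q, true) (x, true) → ¬ hasUp a x → x = q := by
    intro x hx hn
    rcases ReflTransGen.cases_tail hx with e | ⟨⟨w, bw⟩, hw, hs⟩
    · simpa using e
    · rcases hs with ⟨e1, e2, e3⟩ | ⟨e1, e2, e3⟩
      · simp at e2
      · exact absurd ⟨w, mz_up_symm a _ _ e3⟩ hn
  have hst : ∀ x, ¬ hasLow a x → ∀ u, ¬ mzStep a (x, true) u := by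
    rintro x hx u (⟨e1, e2, e3⟩ | ⟨e1, e2, e3⟩)
    · exact hx ⟨_, e3⟩
    · simp at e1
  have hst' : ∀ x, ¬ hasUp a x → ∀ u, ¬ mzStep a (x, false) u := by
    rintro x hx u (⟨e1, e2, e3⟩ | ⟨e1, e2, e3⟩)
    · simp at e1
    · exact hx ⟨_, e3⟩
  have hpw : ReflTransGen (mzStep a) (q, true) (p, true) := by
    obtain ⟨b, h⟩ := mz_walk_cover hb hq hqp
    cases b with
    | true => exact h
    | false => exact absurd (hlowin _ h) hp
  have heq : ∀ s, ReflTransGen (mzStep a) (q, true) s → (∀ u, ¬ mzStep a s u) →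
      s = (p, true) := by
    intro s hs hstuck
    rcases ReflTransGen.total_of_right_unique (mz_step_unique hb) hs hpw with h | h
    · exact mz_stuck h hstuck
    · exact (mz_stuck h (hst p hp)).symm
  obtain ⟨b, h⟩ := mz_walk_cover hb hq hv
  cases b with
  | true =>
    refine ⟨hupin v h, fun hn => ?_⟩
    have := heq _ h (hst v hn)
    simpa using this
  | false =>
    refine ⟨fun hn => ?_, fun hn => absurd (hlowin _ h) hn⟩
    have := heq _ h (hst' v hn)
    simp at this

lemma mz_forward {a : PElt n} (hb : ∀ x : PV n, blockCard a x ≤ 2) (hid : pmul a a = a)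
    (θ : Set (Fin n)) (hθ : IsComp a θ) :
    IsCycleComp a θ ∨ IsInertPathComp a θ ∨ IsTransActivePathComp a θ := by
  by_cases hcyc : ∀ i ∈ θ, hasLow a i ∧ hasUp a i
  · exact Or.inl ⟨hθ, hcyc⟩
  have hpath : IsPathComp a θ := by
    refine ⟨hθ, ?_⟩
    by_contra hcon
    push Not at hcon
    exact hcyc hcon
  by_cases hin : ∀ i ∈ θ, (¬ hasLow a i → inertDown a i) ∧ (¬ hasUp a i → inertUp a i)
  · exact Or.inr (Or.inl ⟨hpath, hin⟩)
  have hT : ∃ p q, q ∈ θ ∧ a.r (.inl p) (.inr q) := by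
    by_contra hcon
    push Not at hcon
    apply hin
    intro i hi
    constructor
    · rintro hn (y | y) hy
      · by_contra hne
        exact hn ⟨y, fun e => hne (by rw [e]), hy⟩
      · refine absurd hy (hcon i y ?_)
        exact (hθ.2 i hi y).1 (EqvGen.symm _ _ (mz_fwd_key hid hy hb))
    · rintro hn (y | y) hy
      · exact absurd (a.iseqv.symm hy) (hcon y i hi)
      · by_contra hne
        exact hn ⟨y, fun e => hne (by rw [e]), hy⟩
  obtain ⟨p, q, hqθ, hpq⟩ := hT
  have hqp := mz_fwd_key hid hpq hb
  have hpθ : p ∈ θ := (hθ.2 q hqθ p).1 hqp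
  have haq : activeUp a q := ⟨p, a.iseqv.symm hpq⟩
  have hap : activeDown a p := ⟨q, hpq⟩
  have hq : ¬ hasUp a q := fun ⟨j, hj⟩ => mz_actUp_free hb q j haq hj
  have hp : ¬ hasLow a p := fun ⟨j, hj⟩ => mz_actDown_free hb p j hap hj
  have hends : ∀ v ∈ θ, (¬ hasUp a v → v = q) ∧ (¬ hasLow a v → v = p) := fun v hv =>
    mz_path_ends hb hq hp hqp ((hθ.2 q hqθ v).2 hv)
  refine Or.inr (Or.inr ⟨hpath, ⟨p, ⟨hpθ, hp⟩, fun v hv => (hends v hv.1).2 hv.2⟩,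
    ⟨q, ⟨hqθ, hq⟩, fun v hv => (hends v hv.1).1 hv.2⟩, fun v hv => ⟨fun h => ?_, fun h => ?_⟩⟩)
  · rw [(hends v hv).2 h]; exact hap
  · rw [(hends v hv).1 h]; exact haq

end MotzkinHelpers

/-- Proposition 2.1. Let `n ≥ 1` and `α ∈ M_n`. Then `α` is idempotent
if and only if every connected component of the interface graph `Γ(α)` is a cycle, an
inert path, or a trans-active path. -/
theorem motzkin_idempotent_iff (n : ℕ) (hn : 1 ≤ n) (a : PElt n) (ha : a ∈ Motzkin n) :
    pmul a a = a ↔ ∀ θ : Set (Fin n), IsComp a θ →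
      IsCycleComp a θ ∨ IsInertPathComp a θ ∨ IsTransActivePathComp a θ := by
  obtain ⟨hpl, hb⟩ := ha
  exact ⟨fun h => mz_forward hb h, fun h => mz_backward hpl hb h⟩
end

section
/- Let n ≥ 1 and let α be an element of the Jones monoid J_n. Then α is idempotent if and only if the interface graph Γ(α) has no path component of odd length. -/
open Relation

/-! ### Twisted semigroup algebras -/

variable {K : Type} [Field K]

/-! ### Two involutions on a finite set -/

/-- Connectivity generated by two maps. -/
def ivConn {V : Type} (s t : V → V) : V → V → Prop :=
  EqvGen (fun x y => s x = y ∨ t x = y)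

theorem ivConn_swap {V : Type} (s t : V → V) (x y : V) : ivConn s t x y ↔ ivConn t s x y := by
  have : (fun x y => s x = y ∨ t x = y) = (fun x y => t x = y ∨ s x = y) := by
    funext x y; simp only [or_comm]
  unfold ivConn; rw [this]

theorem ivConn_closed {V : Type} (s t : V → V) (hs : ∀ x, s (s x) = x) (ht : ∀ x, t (t x) = x)
    (S : V → Prop) (h1 : ∀ x, S x → S (s x)) (h2 : ∀ x, S x → S (t x)) (x y : V)
    (h : ivConn s t x y) : S x ↔ S y := by
  induction h with
  | rel x y h =>
    rcases h with h | h
    · subst h; exact ⟨h1 x, fun h => by simpa [hs] using h1 _ h⟩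
    · subst h; exact ⟨h2 x, fun h => by simpa [ht] using h2 _ h⟩
  | refl => rfl
  | symm _ _ _ ih => exact ih.symm
  | trans _ _ _ _ _ ih1 ih2 => exact ih1.trans ih2

theorem iv_end {V : Type} [Finite V] (s t : V → V) (hs : ∀ x, s (s x) = x) (ht : ∀ x, t (t x) = x)
    (v : V) (hv : s v = v) :
    (∃ u, ivConn s t v u ∧ t u = u ∧ (∀ w, ivConn s t v w → (s w = w ↔ w = v)) ∧
      (∀ w, ivConn s t v w → (t w = w ↔ w = u))) ∨
    (∃ u, ivConn s t v u ∧ u ≠ v ∧ s u = u ∧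
      (∀ w, ivConn s t v w → (s w = w ↔ (w = v ∨ w = u))) ∧
      (∀ w, ivConn s t v w → t w ≠ w)) := by
  set g : V → V := fun x => s (t x) with hg
  have ginj : Function.Injective g := by
    intro x y h
    have := congrArg (fun z => t (s z)) h
    simpa [hg, hs, ht] using this
  have gper : v ∈ Function.periodicPts g := ginj.mem_periodicPts v
  set m := Function.minimalPeriod g v with hm
  have mpos : 0 < m := Function.minimalPeriod_pos_of_mem_periodicPts gper
  have key : ∀ k x, g^[k] (s (g^[k] x)) = s x := by
    intro k
    induction k with
    | zero => intro x; rfl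
    | succ k ih =>
      intro x
      rw [Function.iterate_succ_apply' g k x, Function.iterate_succ_apply]
      have : g (s (g (g^[k] x))) = s (g^[k] x) := by simp [hg, hs, ht]
      rw [this, ih]
  have tg : ∀ x, t x = s (g x) := by intro x; simp [hg, hs]
  have per : ∀ k, g^[k] v = v ↔ m ∣ k := fun k =>
    (Function.isPeriodicPt_iff_minimalPeriod_dvd (f := g) (n := k) (x := v))
  have scl : ∀ k, ∃ k', s (g^[k] v) = g^[k'] v := by
    intro k
    refine ⟨k * (m - 1), ginj.iterate k ?_⟩
    rw [key, hv, ← Function.iterate_add_apply]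
    symm; rw [per]
    refine ⟨k, ?_⟩
    obtain ⟨q, hq⟩ : ∃ q, m = q + 1 := ⟨m - 1, by omega⟩
    rw [hq]; simp; ring
  have sfix : ∀ k, s (g^[k] v) = g^[k] v ↔ m ∣ 2 * k := by
    intro k
    rw [← (ginj.iterate k).eq_iff, key, hv, ← Function.iterate_add_apply, eq_comm, per, two_mul]
  have tfix : ∀ k, t (g^[k] v) = g^[k] v ↔ m ∣ 2 * k + 1 := by
    intro k
    rw [tg, ← Function.iterate_succ_apply' g, ← (ginj.iterate (k+1)).eq_iff, key, hv,
      ← Function.iterate_add_apply, eq_comm, per]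
    have : k + 1 + k = 2 * k + 1 := by ring
    rw [this]
  have orb : ∀ w, ivConn s t v w → ∃ k, k < m ∧ w = g^[k] v := by
    intro w hw
    have := ivConn_closed s t hs ht (fun w => ∃ k, w = g^[k] v)
      (by rintro x ⟨k, rfl⟩; exact scl k)
      (by rintro x ⟨k, rfl⟩; rw [tg, ← Function.iterate_succ_apply' g]; exact scl (k+1)) v w hw
    obtain ⟨k, hk⟩ := this.1 ⟨0, rfl⟩
    exact ⟨k % m, Nat.mod_lt _ mpos, by rw [hk, hm, Function.iterate_mod_minimalPeriod_eq]⟩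
  have conn : ∀ k, ivConn s t v (g^[k] v) := by
    intro k
    induction k with
    | zero => exact EqvGen.refl _
    | succ k ih =>
      rw [Function.iterate_succ_apply']
      exact EqvGen.trans _ _ _ ih (EqvGen.trans _ (t (g^[k] v)) _ (EqvGen.rel _ _ (Or.inr rfl))
        (EqvGen.rel _ _ (Or.inl rfl)))
  have dlt : ∀ k, k < 2 * m → m ∣ k → k = 0 ∨ k = m := by
    rintro k hk ⟨c, rfl⟩
    have : c < 2 := by by_contra h; nlinarith
    interval_cases c <;> simp
  have inj : ∀ k l, k < m → l < m → g^[k] v = g^[l] v → k = l := fun k l hk hl h =>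
    (Function.iterate_eq_iterate_iff_of_lt_minimalPeriod hk hl).1 h
  rcases Nat.even_or_odd' m with ⟨c, hc | hc⟩
  · right
    refine ⟨g^[c] v, conn c, ?_, ?_, ?_, ?_⟩
    · intro h
      have := inj c 0 (by omega) mpos h
      omega
    · rw [sfix, hc]
    · intro w hw
      obtain ⟨k, hk, rfl⟩ := orb w hw
      rw [sfix]
      constructor
      · intro h
        rcases dlt _ (by omega) h with h | h
        · left; have : k = 0 := by omega
          rw [this]; rfl
        · right; have : k = c := by omega
          rw [this]
      · rintro (h | h)
        · have := inj k 0 hk mpos h; rw [this]; simp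
        · have := inj k c hk (by omega) h; rw [this, hc]
    · intro w hw h
      obtain ⟨k, hk, rfl⟩ := orb w hw
      rw [tfix] at h
      rcases dlt _ (by omega) h with h | h <;> omega
  · left
    refine ⟨g^[c] v, conn c, ?_, ?_, ?_⟩
    · rw [tfix, hc]
    · intro w hw
      obtain ⟨k, hk, rfl⟩ := orb w hw
      rw [sfix]
      constructor
      · intro h
        rcases dlt _ (by omega) h with h | h
        · have : k = 0 := by omega
          rw [this]; rfl
        · omega
      · intro h
        have := inj k 0 hk mpos h; rw [this]; simp
    · intro w hw
      obtain ⟨k, hk, rfl⟩ := orb w hw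
      rw [tfix]
      constructor
      · intro h
        rcases dlt _ (by omega) h with h | h
        · omega
        · have : k = c := by omega
          rw [this]
      · intro h
        have := inj k c hk (by omega) h; rw [this, hc]

theorem iv_even {V : Type} (s : V → V) (hs : ∀ x, s (s x) = x) (S : Finset V)
    (h1 : ∀ x ∈ S, s x ∈ S) (h2 : ∀ x ∈ S, s x ≠ x) : Even S.card := by
  have : ∑ x ∈ S, (1 : ZMod 2) = 0 := by
    apply Finset.sum_involution (fun x _ => s x)
    · intros; decide
    · intro x hx _; exact h2 x hx
    · intro x hx; exact h1 x hx
    · intro x hx; exact hs x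
  rw [Finset.sum_const, nsmul_eq_mul, mul_one] at this
  exact (ZMod.natCast_eq_zero_iff_even).1 this

/-- Counting edges inside a closed set. -/
theorem iv_count {n : ℕ} (s : Fin n → Fin n) (hs : ∀ x, s (s x) = x) (S : Finset (Fin n))
    (h1 : ∀ x ∈ S, s x ∈ S) (E : Fin n → Fin n → Prop) (hE : ∀ i j, E i j ↔ i ≠ j ∧ s i = j) :
    2 * Nat.card {p : Fin n × Fin n // p.1 < p.2 ∧ p.1 ∈ S ∧ p.2 ∈ S ∧ E p.1 p.2}
      + (S.filter (fun x => s x = x)).card = S.card := by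
  classical
  have e : {p : Fin n × Fin n // p.1 < p.2 ∧ p.1 ∈ S ∧ p.2 ∈ S ∧ E p.1 p.2} ≃
      {x // x ∈ S.filter (fun x => x < s x)} :=
    { toFun := fun p => ⟨p.1.1, by
        obtain ⟨⟨i, j⟩, h, h', h'', h3⟩ := p
        rw [hE] at h3
        simp only [Finset.mem_filter]; exact ⟨h', by rw [h3.2]; exact h⟩⟩
      invFun := fun x => ⟨(x.1, s x.1), by
        obtain ⟨x, hx⟩ := x
        simp only [Finset.mem_filter] at hx
        exact ⟨hx.2, hx.1, h1 _ hx.1, (hE _ _).2 ⟨hx.2.ne, rfl⟩⟩⟩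
      left_inv := by
        rintro ⟨⟨i, j⟩, h, h', h'', h3⟩
        have := (hE _ _).1 h3
        simp only at this
        simp [this.2]
      right_inv := by rintro ⟨x, hx⟩; rfl }
  rw [Nat.card_congr e, Nat.card_eq_fintype_card, Fintype.card_coe]
  have c1 : (S.filter (fun x => s x < x)).card = (S.filter (fun x => x < s x)).card := by
    apply Finset.card_bij (fun x _ => s x)
    · intro x hx
      simp only [Finset.mem_filter] at hx ⊢
      exact ⟨h1 _ hx.1, by rw [hs]; exact hx.2⟩
    · intro x _ y _ h; rw [← hs x, h, hs]
    · intro x hx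
      simp only [Finset.mem_filter] at hx
      exact ⟨s x, by simp only [Finset.mem_filter]; exact ⟨h1 _ hx.1, by rw [hs]; exact hx.2⟩, hs x⟩
  have c2 := Finset.card_filter_add_card_filter_not (s := S) (fun x => s x = x)
  have c3 := Finset.card_filter_add_card_filter_not (s := S.filter (fun x => ¬ s x = x))
    (fun x => s x < x)
  rw [Finset.filter_filter, Finset.filter_filter] at c3
  have d1 : S.filter (fun x => ¬ s x = x ∧ s x < x) = S.filter (fun x => s x < x) := by
    apply Finset.filter_congr; intro x _
    exact ⟨fun h => h.2, fun h => ⟨h.ne, h⟩⟩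
  have d2 : S.filter (fun x => ¬ s x = x ∧ ¬ s x < x) = S.filter (fun x => x < s x) := by
    apply Finset.filter_congr; intro x _
    exact ⟨fun h => lt_of_le_of_ne (not_lt.1 h.2) (Ne.symm h.1), fun h => ⟨h.ne', not_lt.2 h.le⟩⟩
  rw [d1, d2] at c3
  omega

/-- A non-crossing involution: nothing unpaired lies below an arc and arcs do not cross. -/
structure NCInv {n : ℕ} (s : Fin n → Fin n) : Prop where
  inv : ∀ x, s (s x) = x
  arc : ∀ v p, v < p → p < s v → s p ≠ p ∧ v < s p ∧ s p < s v
  fixd : ∀ v p, s v = v → p < v → s p < v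

theorem nc_arc_parity {n : ℕ} (s : Fin n → Fin n) (hs : NCInv s) (P : Finset (Fin n))
    (hP : ∀ x ∈ P, s x ∈ P) (v : Fin n) (hv : v ∉ P) :
    (P.filter (fun p => p < v)).card % 2 = (P.filter (fun p => p < s v)).card % 2 := by
  have main : ∀ v, v ∉ P → v < s v →
    (P.filter (fun p => p < v)).card % 2 = (P.filter (fun p => p < s v)).card % 2 := by
    intro v hv hlt
    have c := Finset.card_filter_add_card_filter_not (s := P.filter (fun p => p < s v))
      (fun x => x < v)
    rw [Finset.filter_filter, Finset.filter_filter] at c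
    have d1 : P.filter (fun p => p < s v ∧ p < v) = P.filter (fun p => p < v) := by
      apply Finset.filter_congr; intro x _
      exact ⟨fun h => h.2, fun h => ⟨h.trans hlt, h⟩⟩
    have d2 : Even (P.filter (fun p => p < s v ∧ ¬ p < v)).card := by
      have hlt' : ∀ x ∈ P, ¬ x < v → v < x := fun x hx h =>
        lt_of_le_of_ne (not_lt.1 h) (fun h => hv (h ▸ hx))
      apply iv_even s hs.inv
      · intro x hx
        simp only [Finset.mem_filter] at hx ⊢
        have := hs.arc v x (hlt' x hx.1 hx.2.2) hx.2.1
        exact ⟨hP _ hx.1, this.2.2, not_lt.2 this.2.1.le⟩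
      · intro x hx
        simp only [Finset.mem_filter] at hx
        exact (hs.arc v x (hlt' x hx.1 hx.2.2) hx.2.1).1
    rw [d1] at c
    obtain ⟨r, hr⟩ := d2
    omega
  rcases lt_trichotomy v (s v) with h | h | h
  · exact main v hv h
  · rw [← h]
  · have := main (s v) (fun h => hv (by simpa [hs.inv] using hP _ h)) (by rw [hs.inv]; exact h)
    rw [hs.inv] at this; exact this.symm

theorem nc_fix_parity {n : ℕ} (s : Fin n → Fin n) (hs : NCInv s) (P : Finset (Fin n))
    (hP : ∀ x ∈ P, s x ∈ P) (j : Fin n) (hj : j ∈ P) (hu : ∀ x ∈ P, s x = x ↔ x = j)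
    (v : Fin n) (hv : s v = v) :
    (P.filter (fun p => p < v)).card % 2 = if j < v then 1 else 0 := by
  have hjj : s j = j := (hu j hj).2 rfl
  have c := Finset.card_filter_add_card_filter_not (s := P.filter (fun p => p < v))
      (fun x => x = j)
  rw [Finset.filter_filter, Finset.filter_filter] at c
  have d2 : Even (P.filter (fun p => p < v ∧ ¬ p = j)).card := by
    apply iv_even s hs.inv
    · intro x hx
      simp only [Finset.mem_filter] at hx ⊢
      refine ⟨hP _ hx.1, hs.fixd v x hv hx.2.1, fun h => hx.2.2 ?_⟩
      rw [← hs.inv x, h, hjj]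
    · intro x hx h
      simp only [Finset.mem_filter] at hx
      exact hx.2.2 ((hu x hx.1).1 h)
  have d1 : (P.filter (fun p => p < v ∧ p = j)).card = if j < v then 1 else 0 := by
    split_ifs with h
    · rw [Finset.card_eq_one]
      refine ⟨j, ?_⟩
      ext x; simp only [Finset.mem_filter, Finset.mem_singleton]
      exact ⟨fun h => h.2.2, fun e => by subst e; exact ⟨hj, h, rfl⟩⟩
    · rw [Finset.card_eq_zero]
      ext x; simp only [Finset.mem_filter, Finset.notMem_empty, iff_false]
      rintro ⟨_, h', rfl⟩; exact h h'
  rw [d1] at c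
  obtain ⟨r, hr⟩ := d2
  split_ifs at c ⊢ <;> omega

/-- Even paths of two non-crossing involutions do not cross. -/
theorem nc_mono {n : ℕ} (s t : Fin n → Fin n) (hs : NCInv s) (ht : NCInv t)
    (i j i2 j2 : Fin n) (hc : ivConn s t i j)
    (hui : ∀ x, ivConn s t i x → (s x = x ↔ x = i)) (huj : ∀ x, ivConn s t i x → (t x = x ↔ x = j))
    (hc2 : ivConn s t i2 j2) (hi2 : s i2 = i2) (hj2 : t j2 = j2) (hlt : j < j2) : i < i2 := by
  classical
  set P : Finset (Fin n) := Finset.univ.filter (fun x => ivConn s t i x) with hPdef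
  have mem : ∀ x, x ∈ P ↔ ivConn s t i x := by intro x; simp [hPdef]
  have hPs : ∀ x ∈ P, s x ∈ P := fun x hx =>
    (mem _).2 (EqvGen.trans _ _ _ ((mem _).1 hx) (EqvGen.rel _ _ (Or.inl rfl)))
  have hPt : ∀ x ∈ P, t x ∈ P := fun x hx =>
    (mem _).2 (EqvGen.trans _ _ _ ((mem _).1 hx) (EqvGen.rel _ _ (Or.inr rfl)))
  have hj2P : j2 ∉ P := by
    intro h
    have := (huj j2 ((mem _).1 h)).1 hj2
    exact hlt.ne' this
  set S : Fin n → Prop := fun x => x ∉ P ∧ (P.filter (fun p => p < x)).card % 2 = 1 with hS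
  have e1 := nc_fix_parity t ht P hPt j ((mem _).2 hc) (fun x hx => huj x ((mem _).1 hx)) j2 hj2
  rw [if_pos hlt] at e1
  have hS2 : S i2 := by
    refine (ivConn_closed s t hs.inv ht.inv S ?_ ?_ i2 j2 hc2).2 ⟨hj2P, e1⟩
    · rintro x ⟨hx, h⟩
      exact ⟨fun h => hx (by simpa [hs.inv] using hPs _ h),
        (nc_arc_parity s hs P hPs x hx).symm.trans h⟩
    · rintro x ⟨hx, h⟩
      exact ⟨fun h => hx (by simpa [ht.inv] using hPt _ h),
        (nc_arc_parity t ht P hPt x hx).symm.trans h⟩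
  have e2 := nc_fix_parity s hs P hPs i ((mem _).2 (EqvGen.refl _))
    (fun x hx => hui x ((mem _).1 hx)) i2 hi2
  rw [hS2.2] at e2
  by_contra h
  rw [if_neg h] at e2
  exact one_ne_zero e2

/-! ### Structure of Jones elements -/

theorem ord_ll {n : ℕ} {i j : Fin n} (h : i < j) : ordIdx n (.inl i) < ordIdx n (.inl j) := h

theorem ord_lr {n : ℕ} (i j : Fin n) : ordIdx n (.inl i) < ordIdx n (.inr j) := by
  have := i.isLt
  have := j.isLt
  simp only [ordIdx]; omega

theorem ord_rr {n : ℕ} {i j : Fin n} (h : j < i) : ordIdx n (.inr i) < ordIdx n (.inr j) := by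
  have := i.isLt
  have := j.isLt
  have : (j : ℕ) < i := h
  simp only [ordIdx]; omega

/-- The two involutions attached to a Jones element. -/
structure JData {n : ℕ} (a : PElt n) (s t : Fin n → Fin n) : Prop where
  two : ∀ x y z, a.r x y → a.r x z → y ≠ x → z ≠ x → y = z
  ncs : NCInv s
  nct : NCInv t
  low : ∀ i j, LowEdge a i j ↔ i ≠ j ∧ s i = j
  up : ∀ i j, UpEdge a i j ↔ i ≠ j ∧ t i = j
  sfix : ∀ i, s i = i ↔ ∃ k, a.r (.inl i) (.inr k)
  tfix : ∀ i, t i = i ↔ ∃ k, a.r (.inl k) (.inr i)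
  mono : ∀ i i2 l l2, a.r (.inl i) (.inr l) → a.r (.inl i2) (.inr l2) → i < i2 → l < l2

theorem jones_data {n : ℕ} (a : PElt n) (ha : a ∈ Jones n) : ∃ s t, JData a s t := by
  obtain ⟨hpl, hb⟩ := ha
  have rsymm : ∀ {x y}, a.r x y → a.r y x := fun h => a.iseqv.symm h
  have hex : ∀ x, ∃ y, y ≠ x ∧ a.r x y ∧ ∀ z, a.r x z → z ≠ x → z = y := by
    intro x
    have := hb x
    unfold blockCard at this
    rw [Nat.card_eq_two_iff' ⟨x, a.iseqv.refl x⟩] at this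
    obtain ⟨⟨y, hy⟩, h1, h2⟩ := this
    refine ⟨y, fun h => h1 (Subtype.ext h), hy, fun z hz hzx => ?_⟩
    have := h2 ⟨z, hz⟩ (fun h => hzx (congrArg Subtype.val h))
    exact congrArg Subtype.val this
  have two : ∀ x y z, a.r x y → a.r x z → y ≠ x → z ≠ x → y = z := by
    intro x y z h1 h2 h3 h4
    obtain ⟨w, _, _, hw⟩ := hex x
    rw [hw y h1 h3, hw z h2 h4]
  have pl : ∀ w x y z, ordIdx n w < ordIdx n x → ordIdx n x < ordIdx n y →
      ordIdx n y < ordIdx n z → a.r w y → a.r x z → False := by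
    intro w x y z h1 h2 h3 h4 h5
    apply hpl
    refine ⟨w, x, y, z, h1, h2, h3, h4, h5, fun h6 => ?_⟩
    have : x = y := two w x y h6 h4 (by rintro rfl; omega) (by rintro rfl; omega)
    subst this; omega
  have hs : ∀ i, ∃ j, (j ≠ i ∧ a.r (.inl i) (.inl j)) ∨ (j = i ∧ ∃ k, a.r (.inl i) (.inr k)) := by
    intro i
    obtain ⟨y, h1, h2, _⟩ := hex (.inl i)
    rcases y with j | k
    · exact ⟨j, Or.inl ⟨fun h => h1 (by rw [h]), h2⟩⟩
    · exact ⟨i, Or.inr ⟨rfl, k, h2⟩⟩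
  have ht : ∀ i, ∃ j, (j ≠ i ∧ a.r (.inr i) (.inr j)) ∨ (j = i ∧ ∃ k, a.r (.inr i) (.inl k)) := by
    intro i
    obtain ⟨y, h1, h2, _⟩ := hex (.inr i)
    rcases y with k | j
    · exact ⟨i, Or.inr ⟨rfl, k, h2⟩⟩
    · exact ⟨j, Or.inl ⟨fun h => h1 (by rw [h]), h2⟩⟩
  choose s hs using hs
  choose t ht using ht
  have hs1 : ∀ i, s i ≠ i → a.r (.inl i) (.inl (s i)) := by
    intro i h; rcases hs i with h' | h'
    · exact h'.2
    · exact absurd h'.1 h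
  have ht1 : ∀ i, t i ≠ i → a.r (.inr i) (.inr (t i)) := by
    intro i h; rcases ht i with h' | h'
    · exact h'.2
    · exact absurd h'.1 h
  have low : ∀ i j, LowEdge a i j ↔ i ≠ j ∧ s i = j := by
    intro i j
    constructor
    · rintro ⟨h1, h2⟩
      refine ⟨h1, ?_⟩
      rcases hs i with h' | ⟨_, k, hk⟩
      · have := two _ _ _ h'.2 h2 (by simpa using h'.1) (by simpa using h1.symm)
        simpa using this
      · have := two _ _ _ hk h2 (by simp) (by simpa using h1.symm)
        simp at this
    · rintro ⟨h1, rfl⟩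
      exact ⟨h1, hs1 i h1.symm⟩
  have up : ∀ i j, UpEdge a i j ↔ i ≠ j ∧ t i = j := by
    intro i j
    constructor
    · rintro ⟨h1, h2⟩
      refine ⟨h1, ?_⟩
      rcases ht i with h' | ⟨_, k, hk⟩
      · have := two _ _ _ h'.2 h2 (by simpa using h'.1) (by simpa using h1.symm)
        simpa using this
      · have := two _ _ _ hk h2 (by simp) (by simpa using h1.symm)
        simp at this
    · rintro ⟨h1, rfl⟩
      exact ⟨h1, ht1 i h1.symm⟩
  have sfix : ∀ i, s i = i ↔ ∃ k, a.r (.inl i) (.inr k) := by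
    intro i
    constructor
    · intro h
      rcases hs i with h' | h'
      · exact absurd h h'.1
      · exact h'.2
    · rintro ⟨k, hk⟩
      by_contra h
      have := two _ _ _ hk (hs1 i h) (by simp) (by simpa using h)
      simp at this
  have tfix : ∀ i, t i = i ↔ ∃ k, a.r (.inl k) (.inr i) := by
    intro i
    constructor
    · intro h
      rcases ht i with h' | ⟨_, k, hk⟩
      · exact absurd h h'.1
      · exact ⟨k, rsymm hk⟩
    · rintro ⟨k, hk⟩
      by_contra h
      have := two _ _ _ (rsymm hk) (ht1 i h) (by simp) (by simpa using h)
      simp at this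
  have sinv : ∀ i, s (s i) = i := by
    intro i
    by_cases h : s i = i
    · rw [h, h]
    · exact ((low (s i) i).1 ⟨h, rsymm (hs1 i h)⟩).2
  have tinv : ∀ i, t (t i) = i := by
    intro i
    by_cases h : t i = i
    · rw [h, h]
    · exact ((up (t i) i).1 ⟨h, rsymm (ht1 i h)⟩).2
  refine ⟨s, t, two, ⟨sinv, ?_, ?_⟩, ⟨tinv, ?_, ?_⟩, low, up, sfix, tfix, ?_⟩
  · intro v p h1 h2
    have hv := hs1 v (h1.trans h2).ne'
    have hp : s p ≠ p := by
      intro h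
      obtain ⟨k, hk⟩ := (sfix p).1 h
      exact pl _ _ _ _ (ord_ll h1) (ord_ll h2) (ord_lr _ k) hv hk
    have hp' := hs1 p hp
    refine ⟨hp, ?_, ?_⟩
    · rcases lt_trichotomy v (s p) with h | h | h
      · exact h
      · exact absurd (by rw [h, sinv]) h2.ne
      · exact (pl _ _ _ _ (ord_ll h) (ord_ll h1) (ord_ll h2) (rsymm hp') hv).elim
    · rcases lt_trichotomy (s p) (s v) with h | h | h
      · exact h
      · exact absurd (by rw [← sinv p, h, sinv]) h1.ne'
      · exact (pl _ _ _ _ (ord_ll h1) (ord_ll h2) (ord_ll h) hv hp').elim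
  · intro v p hv h1
    obtain ⟨k, hk⟩ := (sfix v).1 hv
    rcases lt_trichotomy (s p) v with h | h | h
    · exact h
    · exact absurd (by rw [← sinv p, h, hv]) h1.ne
    · exact (pl _ _ _ _ (ord_ll h1) (ord_ll h) (ord_lr _ k) (hs1 p (h1.trans h).ne') hk).elim
  · intro v p h1 h2
    have hv := ht1 v (h1.trans h2).ne'
    have hp : t p ≠ p := by
      intro h
      obtain ⟨k, hk⟩ := (tfix p).1 h
      exact pl _ _ _ _ (ord_lr k _) (ord_rr h2) (ord_rr h1) hk (rsymm hv)
    have hp' := ht1 p hp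
    refine ⟨hp, ?_, ?_⟩
    · rcases lt_trichotomy v (t p) with h | h | h
      · exact h
      · exact absurd (by rw [h, tinv]) h2.ne
      · exact (pl _ _ _ _ (ord_rr h2) (ord_rr h1) (ord_rr h) (rsymm hv) hp').elim
    · rcases lt_trichotomy (t p) (t v) with h | h | h
      · exact h
      · exact absurd (by rw [← tinv p, h, tinv]) h1.ne'
      · exact (pl _ _ _ _ (ord_rr h) (ord_rr h2) (ord_rr h1) (rsymm hp') (rsymm hv)).elim
  · intro v p hv h1
    obtain ⟨k, hk⟩ := (tfix v).1 hv
    rcases lt_trichotomy (t p) v with h | h | h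
    · exact h
    · exact absurd (by rw [← tinv p, h, hv]) h1.ne
    · exact (pl _ _ _ _ (ord_lr k _) (ord_rr h) (ord_rr h1) hk
        (rsymm (ht1 p (h1.trans h).ne'))).elim
  · intro i i2 l l2 h1 h2 h3
    rcases lt_trichotomy l l2 with h | h | h
    · exact h
    · subst h
      have := two _ _ _ (rsymm h1) (rsymm h2) (by simp) (by simp)
      exact absurd (by simpa using this) h3.ne
    · exact (pl _ _ _ _ (ord_ll h3) (ord_lr _ _) (ord_rr h) h1 h2).elim

theorem gconn_iff {n : ℕ} {a : PElt n} {s t : Fin n → Fin n} (hd : JData a s t) (x y : Fin n) :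
    gconn a x y ↔ ivConn s t x y := by
  constructor
  · intro h
    induction h with
    | rel x y h =>
      rcases h with h | h
      · exact EqvGen.rel _ _ (Or.inl ((hd.low _ _).1 h).2)
      · exact EqvGen.rel _ _ (Or.inr ((hd.up _ _).1 h).2)
    | refl => exact EqvGen.refl _
    | symm _ _ _ ih => exact EqvGen.symm _ _ ih
    | trans _ _ _ _ _ ih1 ih2 => exact EqvGen.trans _ _ _ ih1 ih2
  · intro h
    induction h with
    | rel x y h =>
      by_cases e : x = y
      · subst e; exact EqvGen.refl _
      · rcases h with h | h
        · exact EqvGen.rel _ _ (Or.inl ((hd.low _ _).2 ⟨e, h⟩))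
        · exact EqvGen.rel _ _ (Or.inr ((hd.up _ _).2 ⟨e, h⟩))
    | refl => exact EqvGen.refl _
    | symm _ _ _ ih => exact EqvGen.symm _ _ ih
    | trans _ _ _ _ _ ih1 ih2 => exact EqvGen.trans _ _ _ ih1 ih2

theorem hasLow_iff {n : ℕ} {a : PElt n} {s t : Fin n → Fin n} (hd : JData a s t) (x : Fin n) :
    ¬ hasLow a x ↔ s x = x := by
  unfold hasLow
  simp only [hd.low]
  constructor
  · intro h; by_contra h'; exact h ⟨s x, fun e => h' e.symm, rfl⟩
  · rintro h ⟨j, h1, h2⟩; exact h1 (h.symm.trans h2)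

theorem hasUp_iff {n : ℕ} {a : PElt n} {s t : Fin n → Fin n} (hd : JData a s t) (x : Fin n) :
    ¬ hasUp a x ↔ t x = x := by
  unfold hasUp
  simp only [hd.up]
  constructor
  · intro h; by_contra h'; exact h ⟨t x, fun e => h' e.symm, rfl⟩
  · rintro h ⟨j, h1, h2⟩; exact h1 (h.symm.trans h2)

/-- Classification of the path component through a terminus `v`. -/
theorem path_class {n : ℕ} {a : PElt n} {s t : Fin n → Fin n} (hd : JData a s t) (v : Fin n)
    (hv : s v = v ∨ t v = v) (θ : Set (Fin n)) (hθ : ∀ w, w ∈ θ ↔ ivConn s t v w) :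
    (Even (compEdgeCount a θ) ∧ ∃ i j, ivConn s t v i ∧ ivConn s t v j ∧
      (∀ w, ivConn s t v w → (s w = w ↔ w = i)) ∧ (∀ w, ivConn s t v w → (t w = w ↔ w = j))) ∨
    (Odd (compEdgeCount a θ) ∧ ∃ i j, ivConn s t v i ∧ ivConn s t v j ∧ i ≠ j ∧
      ((s i = i ∧ s j = j) ∨ (t i = i ∧ t j = j))) := by
  classical
  set S : Finset (Fin n) := Finset.univ.filter (fun x => ivConn s t v x) with hSdef
  have mem : ∀ x, x ∈ S ↔ ivConn s t v x := by intro x; simp [hSdef]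
  have hSs : ∀ x ∈ S, s x ∈ S := fun x hx =>
    (mem _).2 (EqvGen.trans _ _ _ ((mem _).1 hx) (EqvGen.rel _ _ (Or.inl rfl)))
  have hSt : ∀ x ∈ S, t x ∈ S := fun x hx =>
    (mem _).2 (EqvGen.trans _ _ _ ((mem _).1 hx) (EqvGen.rel _ _ (Or.inr rfl)))
  have hθS : θ = (S : Set (Fin n)) := by
    ext x; rw [hθ, Finset.mem_coe, mem]
  have c1 := iv_count s hd.ncs.inv S hSs (LowEdge a) hd.low
  have c2 := iv_count t hd.nct.inv S hSt (UpEdge a) hd.up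
  have c3 : compEdgeCount a θ =
    Nat.card {p : Fin n × Fin n // p.1 < p.2 ∧ p.1 ∈ S ∧ p.2 ∈ S ∧ LowEdge a p.1 p.2} +
    Nat.card {p : Fin n × Fin n // p.1 < p.2 ∧ p.1 ∈ S ∧ p.2 ∈ S ∧ UpEdge a p.1 p.2} := by
    rw [hθS]; rfl
  have one : ∀ (f : Fin n → Fin n) (i : Fin n), ivConn s t v i →
      (∀ w, ivConn s t v w → (f w = w ↔ w = i)) → (S.filter (fun x => f x = x)).card = 1 := by
    intro f i hi h
    rw [Finset.card_eq_one]
    refine ⟨i, ?_⟩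
    ext x; simp only [Finset.mem_filter, Finset.mem_singleton, mem]
    exact ⟨fun h' => (h x h'.1).1 h'.2, fun e => by subst e; exact ⟨hi, (h _ hi).2 rfl⟩⟩
  have zero : ∀ (f : Fin n → Fin n),
      (∀ w, ivConn s t v w → f w ≠ w) → (S.filter (fun x => f x = x)).card = 0 := by
    intro f h
    rw [Finset.card_eq_zero]
    ext x; simp only [Finset.mem_filter, Finset.notMem_empty, iff_false, mem]
    exact fun h' => h x h'.1 h'.2
  have two : ∀ (f : Fin n → Fin n) (i j : Fin n), ivConn s t v i → ivConn s t v j → i ≠ j →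
      (∀ w, ivConn s t v w → (f w = w ↔ (w = i ∨ w = j))) →
      (S.filter (fun x => f x = x)).card = 2 := by
    intro f i j hi hj hij h
    rw [Finset.card_eq_two]
    refine ⟨i, j, hij, ?_⟩
    ext x; simp only [Finset.mem_filter, Finset.mem_singleton, Finset.mem_insert, mem]
    refine ⟨fun h' => (h x h'.1).1 h'.2, ?_⟩
    rintro (e | e)
    · subst e; exact ⟨hi, (h _ hi).2 (Or.inl rfl)⟩
    · subst e; exact ⟨hj, (h _ hj).2 (Or.inr rfl)⟩
  have vv : ivConn s t v v := EqvGen.refl _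
  rcases hv with hv | hv
  · rcases iv_end s t hd.ncs.inv hd.nct.inv v hv with ⟨u, h1, h2, h3, h4⟩ | ⟨u, h1, h2, h3, h4, h5⟩
    · left
      refine ⟨?_, v, u, vv, h1, h3, h4⟩
      rw [one s v vv h3] at c1
      rw [one t u h1 h4] at c2
      rw [c3, Nat.even_iff]; omega
    · right
      refine ⟨?_, v, u, vv, h1, h2.symm, Or.inl ⟨hv, h3⟩⟩
      rw [two s v u vv h1 h2.symm h4] at c1
      rw [zero t h5] at c2
      rw [c3, Nat.odd_iff]; omega
  · have H := iv_end t s hd.nct.inv hd.ncs.inv v hv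
    simp only [ivConn_swap t s] at H
    rcases H with ⟨u, h1, h2, h3, h4⟩ | ⟨u, h1, h2, h3, h4, h5⟩
    · left
      refine ⟨?_, u, v, h1, vv, h4, h3⟩
      rw [one t v vv h3] at c2
      rw [one s u h1 h4] at c1
      rw [c3, Nat.even_iff]; omega
    · right
      refine ⟨?_, v, u, vv, h1, h2.symm, Or.inr ⟨hv, h3⟩⟩
      rw [two t v u vv h1 h2.symm h4] at c2
      rw [zero s h5] at c1
      rw [c3, Nat.odd_iff]; omega

/-! ### Stacked connectivity -/

theorem stack_up {n : ℕ} {a : PElt n} {p q : PV n} (h : a.r p q) :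
    EqvGen (stackRel a a) (upEmb p) (upEmb q) := EqvGen.rel _ _ (Or.inl ⟨p, q, h, rfl, rfl⟩)

theorem stack_down {n : ℕ} {a : PElt n} {p q : PV n} (h : a.r p q) :
    EqvGen (stackRel a a) (downEmb p) (downEmb q) := EqvGen.rel _ _ (Or.inr ⟨p, q, h, rfl, rfl⟩)

theorem stack_mid {n : ℕ} {a : PElt n} {s t : Fin n → Fin n} (hd : JData a s t) {x y : Fin n}
    (h : ivConn s t x y) : EqvGen (stackRel a a) (.inr (.inl x)) (.inr (.inl y)) := by
  rw [← gconn_iff hd] at h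
  induction h with
  | rel x y h =>
    rcases h with h | h
    · exact stack_down h.2
    · exact stack_up h.2
  | refl => exact EqvGen.refl _
  | symm _ _ _ ih => exact EqvGen.symm _ _ ih
  | trans _ _ _ _ _ ih1 ih2 => exact EqvGen.trans _ _ _ ih1 ih2

/-- The block of `a` reached from a vertex of the stacked diagram. -/
def stackLabel {n : ℕ} (a : PElt n) (s t : Fin n → Fin n) : TV n → Set (PV n)
  | .inl i => {p | a.r (.inl i) p}
  | .inr (.inl j) => {p | ∃ i, ivConn s t j i ∧
      ((s i = i ∧ a.r (.inl i) p) ∨ (t i = i ∧ a.r (.inr i) p))}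
  | .inr (.inr i) => {p | a.r (.inr i) p}

theorem idem_of_even {n : ℕ} {a : PElt n} {s t : Fin n → Fin n} (hd : JData a s t)
    (H : ∀ v, (s v = v ∨ t v = v) → ∃ i j, ivConn s t v i ∧ ivConn s t v j ∧
      (∀ w, ivConn s t v w → (s w = w ↔ w = i)) ∧ (∀ w, ivConn s t v w → (t w = w ↔ w = j))) :
    pmul a a = a := by
  have rsymm : ∀ {x y}, a.r x y → a.r y x := fun h => a.iseqv.symm h
  have rtrans : ∀ {x y z}, a.r x y → a.r y z → a.r x z := fun h h' => a.iseqv.trans h h'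
  have H1 : ∀ j : {j // t j = j}, ∃ (i : Fin n) (l : {j // t j = j}), ivConn s t i j.1 ∧ s i = i ∧
      (∀ w, ivConn s t i w → (s w = w ↔ w = i)) ∧ (∀ w, ivConn s t i w → (t w = w ↔ w = j.1)) ∧
      a.r (.inl i) (.inr l.1) := by
    rintro ⟨j, hj⟩
    obtain ⟨i, j', h1, h2, h3, h4⟩ := H j (Or.inr hj)
    have e : j = j' := (h4 j (EqvGen.refl _)).1 hj
    subst e
    have hi : s i = i := (h3 i h1).2 rfl
    obtain ⟨k, hk⟩ := (hd.sfix i).1 hi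
    have hk' : t k = k := (hd.tfix k).2 ⟨i, hk⟩
    exact ⟨i, ⟨k, hk'⟩, EqvGen.symm _ _ h1, hi,
      fun w hw => h3 w (EqvGen.trans _ _ _ h1 hw), fun w hw => h4 w (EqvGen.trans _ _ _ h1 hw), hk⟩
  choose e f hc hfx hu1 hu2 har using H1
  have fm : StrictMono f := by
    intro j j2 hlt
    refine hd.mono _ _ _ _ (har j) (har j2) ?_
    exact nc_mono s t hd.ncs hd.nct (e j) j.1 (e j2) j2.1 (hc j) (hu1 j) (hu2 j) (hc j2) (hfx j2)
      j2.2 hlt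
  have fid : ∀ j, f j = j := fun j => le_antisymm (fm.apply_le) (fm.le_apply)
  have K : ∀ i j, ivConn s t i j → s i = i → t j = j → a.r (.inl i) (.inr j) := by
    intro i j h hi hj
    have e1 : i = e ⟨j, hj⟩ :=
      (hu1 ⟨j, hj⟩ i (EqvGen.trans _ _ _ (hc ⟨j, hj⟩) (EqvGen.symm _ _ h))).1 hi
    have := har ⟨j, hj⟩
    rw [fid, ← e1] at this
    exact this
  have lab : ∀ x y, EqvGen (stackRel a a) x y → stackLabel a s t x = stackLabel a s t y := by
    have cls : ∀ {x y : PV n}, a.r x y → {p | a.r x p} = {p | a.r y p} := by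
      intro x y h; ext p
      exact ⟨fun h' => rtrans (rsymm h) h', fun h' => rtrans h h'⟩
    have mm : ∀ x y, ivConn s t x y →
        stackLabel a s t (.inr (.inl x)) = stackLabel a s t (.inr (.inl y)) := by
      intro x y h; ext p
      constructor
      · rintro ⟨i, h1, h2⟩; exact ⟨i, EqvGen.trans _ _ _ (EqvGen.symm _ _ h) h1, h2⟩
      · rintro ⟨i, h1, h2⟩; exact ⟨i, EqvGen.trans _ _ _ h h1, h2⟩
    have ms : ∀ i, s i = i → stackLabel a s t (.inr (.inl i)) = {p | a.r (.inl i) p} := by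
      intro i hi; ext p
      obtain ⟨i', j', h1, h2, h3, h4⟩ := H i (Or.inl hi)
      have e1 := (h3 i (EqvGen.refl _)).1 hi
      subst e1
      constructor
      · rintro ⟨k, hk, ⟨h5, h6⟩ | ⟨h5, h6⟩⟩
        · have := (h3 k hk).1 h5
          subst this; exact h6
        · exact rtrans (K i k hk hi h5) h6
      · intro h; exact ⟨i, EqvGen.refl _, Or.inl ⟨hi, h⟩⟩
    have mt : ∀ i, t i = i → stackLabel a s t (.inr (.inl i)) = {p | a.r (.inr i) p} := by
      intro i hi; ext p
      obtain ⟨i', j', h1, h2, h3, h4⟩ := H i (Or.inr hi)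
      have e1 := (h4 i (EqvGen.refl _)).1 hi
      subst e1
      constructor
      · rintro ⟨k, hk, ⟨h5, h6⟩ | ⟨h5, h6⟩⟩
        · exact rtrans (rsymm (K k i (EqvGen.symm _ _ hk) h5 hi)) h6
        · have := (h4 k hk).1 h5
          subst this; exact h6
      · intro h; exact ⟨i, EqvGen.refl _, Or.inr ⟨hi, h⟩⟩
    intro x y h
    induction h with
    | rel x y h =>
      rcases h with ⟨p, q, h, rfl, rfl⟩ | ⟨p, q, h, rfl, rfl⟩
      · rcases p with i | i <;> rcases q with j | j
        · exact cls h
        · exact (cls h).trans (mt j ((hd.tfix j).2 ⟨i, h⟩)).symm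
        · exact (mt i ((hd.tfix i).2 ⟨j, rsymm h⟩)).trans (cls h)
        · by_cases e : i = j
          · subst e; rfl
          · exact mm i j (EqvGen.rel _ _ (Or.inr ((hd.up i j).1 ⟨e, h⟩).2))
      · rcases p with i | i <;> rcases q with j | j
        · by_cases e : i = j
          · subst e; rfl
          · exact mm i j (EqvGen.rel _ _ (Or.inl ((hd.low i j).1 ⟨e, h⟩).2))
        · exact (ms i ((hd.sfix i).2 ⟨j, h⟩)).trans (cls h)
        · exact (cls h).trans (ms j ((hd.sfix j).2 ⟨i, rsymm h⟩)).symm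
        · exact cls h
    | refl => rfl
    | symm _ _ _ ih => exact ih.symm
    | trans _ _ _ _ _ ih1 ih2 => exact ih1.trans ih2
  have tr : ∀ i j, a.r (.inl i) (.inr j) →
      EqvGen (stackRel a a) (.inl i) (.inr (.inr j)) := by
    intro i j h
    have hj : t j = j := (hd.tfix j).2 ⟨i, h⟩
    obtain ⟨k, j', h1, h2, h3, h4⟩ := H j (Or.inr hj)
    have hk : s k = k := (h3 k h1).2 rfl
    have := K k j (EqvGen.symm _ _ h1) hk hj
    exact EqvGen.trans _ _ _ (stack_up h) (EqvGen.trans _ _ _ (stack_mid hd h1) (stack_down this))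
  apply Setoid.ext
  intro x y
  constructor
  · intro h
    have h' := lab _ _ h
    have hx : stackLabel a s t (outEmb x) = {p | a.r x p} := by rcases x with i | i <;> rfl
    have hy : stackLabel a s t (outEmb y) = {p | a.r y p} := by rcases y with i | i <;> rfl
    rw [hx, hy] at h'
    have : y ∈ {p | a.r x p} := by rw [h']; exact a.iseqv.refl y
    exact this
  · intro h
    show EqvGen (stackRel a a) (outEmb x) (outEmb y)
    rcases x with i | i <;> rcases y with j | j
    · exact stack_up h
    · exact tr i j h
    · exact EqvGen.symm _ _ (tr j i (rsymm h))
    · exact stack_down h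

/-- Corollary 2.2. Let `n ≥ 1` and `α ∈ J_n`. Then `α` is idempotent
if and only if the interface graph `Γ(α)` has no path component of odd length. -/
theorem jones_idempotent_iff (n : ℕ) (hn : 1 ≤ n) (a : PElt n) (ha : a ∈ Jones n) :
    pmul a a = a ↔ ¬ ∃ θ : Set (Fin n), IsPathComp a θ ∧ Odd (compEdgeCount a θ) := by
  obtain ⟨s, t, hd⟩ := jones_data a ha
  have rsymm : ∀ {x y}, a.r x y → a.r y x := fun h => a.iseqv.symm h
  constructor
  · rintro hid ⟨θ, ⟨⟨_, hcomp⟩, v, hv, hend⟩, hodd⟩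
    have hθ : ∀ w, w ∈ θ ↔ ivConn s t v w := fun w => by rw [← gconn_iff hd, hcomp v hv w]
    rw [hasLow_iff hd, hasUp_iff hd] at hend
    have back : ∀ x y, EqvGen (stackRel a a) (outEmb x) (outEmb y) → a.r x y := by
      intro x y h
      have h' : (pmul a a).r x y := h
      rw [hid] at h'; exact h'
    rcases path_class hd v hend θ hθ with ⟨hev, _⟩ | ⟨_, i, j, hi, hj, hij, h⟩
    · exact (Nat.not_even_iff_odd.2 hodd) hev
    · have hc : ivConn s t i j := EqvGen.trans _ _ _ (EqvGen.symm _ _ hi) hj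
      rcases h with ⟨h1, h2⟩ | ⟨h1, h2⟩
      · obtain ⟨k, hk⟩ := (hd.sfix i).1 h1
        obtain ⟨l, hl⟩ := (hd.sfix j).1 h2
        have h3 : a.r (.inr k) (.inr l) := back (.inr k) (.inr l)
          (EqvGen.trans _ _ _ (stack_down (rsymm hk))
            (EqvGen.trans _ _ _ (stack_mid hd hc) (stack_down hl)))
        have h4 : a.r (.inl i) (.inl j) := a.iseqv.trans hk (a.iseqv.trans h3 (rsymm hl))
        have := hd.two _ _ _ h4 hk (by simpa using hij.symm) (by simp)
        simp at this
      · obtain ⟨k, hk⟩ := (hd.tfix i).1 h1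
        obtain ⟨l, hl⟩ := (hd.tfix j).1 h2
        have h3 : a.r (.inl k) (.inl l) := back (.inl k) (.inl l)
          (EqvGen.trans _ _ _ (stack_up hk)
            (EqvGen.trans _ _ _ (stack_mid hd hc) (stack_up (rsymm hl))))
        have h4 : a.r (.inr i) (.inr j) := a.iseqv.trans (rsymm hk) (a.iseqv.trans h3 hl)
        have := hd.two _ _ _ h4 (rsymm hk) (by simpa using hij.symm) (by simp)
        simp at this
  · intro hno
    apply idem_of_even hd
    intro v hv
    rcases path_class hd v hv {w | ivConn s t v w} (fun w => Iff.rfl) with ⟨_, h⟩ | ⟨hodd, _⟩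
    · exact h
    · exfalso
      apply hno
      refine ⟨_, ⟨⟨⟨v, EqvGen.refl _⟩, ?_⟩, v, EqvGen.refl _, ?_⟩, hodd⟩
      · intro i hi j
        rw [gconn_iff hd]
        exact ⟨fun h => EqvGen.trans _ _ _ hi h, fun h => EqvGen.trans _ _ _ (EqvGen.symm _ _ hi) h⟩
      · rw [hasLow_iff hd, hasUp_iff hd]; exact hv
end

section
/- Let δ ∈ D, let θ ∈ Θ(δ), and let α, β ∈ M_n with α ≺_θ β (β is a θ-cover of α). Then (i) if α is an idempotent of M_n then β is an idempotent of M_n, and (ii) if α ∈ J_n then β ∈ J_n. -/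
open Relation

/-! ### Twisted semigroup algebras -/

variable {K : Type} [Field K]

/-- A finite set with a fixed-point free partial matching has even size. -/
lemma tc_even {α : Type*} (C : Finset α) (R : α → α → Prop)
    (hs : ∀ x y, R x y → R y x) (hi : ∀ x y, R x y → x ≠ y)
    (hf : ∀ x y z, R x y → R x z → y = z)
    (h : ∀ x ∈ C, ∃ y ∈ C, R x y) : ((C.card : ℕ) : ZMod 2) = 0 := by
  classical
  choose g hg using h
  have := Finset.sum_involution (s := C) (f := fun _ => (1 : ZMod 2)) g
    (fun a ha => by decide)
    (fun a ha _ => (hi _ _ (hg a ha).2).symm)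
    (fun a ha => (hg a ha).1)
    (fun a ha => (hf _ _ _ (hs _ _ (hg a ha).2) (hg _ (hg a ha).1).2).symm)
  simpa using this

/-- Following a cycle from one end of a deleted edge one meets the other deleted edge. -/
lemma tc_reach {n : ℕ} (L U red : Fin n → Fin n → Prop)
    (hLs : ∀ x y, L x y → L y x) (hLi : ∀ x y, L x y → x ≠ y)
    (hLf : ∀ x y z, L x y → L x z → y = z)
    (hUs : ∀ x y, U x y → U y x) (hUi : ∀ x y, U x y → x ≠ y)
    (hUf : ∀ x y z, U x y → U x z → y = z)
    (θ : Set (Fin n)) (hL : ∀ x ∈ θ, ∃ y ∈ θ, L x y) (hU : ∀ x ∈ θ, ∃ y ∈ θ, U x y)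
    (hc : ∀ x ∈ θ, ∀ y ∈ θ, EqvGen (fun u v => L u v ∨ U u v) x y)
    (i j k l : Fin n) (hi : i ∈ θ) (hk : k ∈ θ) (hkl : L k l)
    (hred : ∀ u v, red u v ↔ (L u v ∧ ({u, v} : Set (Fin n)) ≠ {k, l}) ∨
      (U u v ∧ ({u, v} : Set (Fin n)) ≠ {i, j})) :
    EqvGen red k i ∨ EqvGen red k j := by
  classical
  by_contra hcon
  rw [not_or] at hcon
  obtain ⟨h1, h2⟩ := hcon
  have hUred : ∀ x y, EqvGen red k x → U x y → EqvGen red k y := by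
    intro x y hx hxy
    refine hx.trans _ _ _ (.rel _ _ ((hred _ _).2 (.inr ⟨hxy, ?_⟩)))
    intro he
    have : x ∈ ({i, j} : Set (Fin n)) := he ▸ (by simp)
    rcases this with rfl | rfl
    · exact h1 hx
    · exact h2 hx
  have hLred : ∀ x y, EqvGen red k x → L x y → x ≠ k → x ≠ l → EqvGen red k y := by
    intro x y hx hxy hxk hxl
    refine hx.trans _ _ _ (.rel _ _ ((hred _ _).2 (.inl ⟨hxy, ?_⟩)))
    intro he
    have : x ∈ ({k, l} : Set (Fin n)) := he ▸ (by simp)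
    rcases this with rfl | rfl
    · exact hxk rfl
    · exact hxl rfl
  have hθ : ∀ x y, EqvGen red x y → (x ∈ θ ↔ y ∈ θ) := by
    intro x y h
    induction h with
    | rel x y h =>
      have aux : ∀ x y, red x y → x ∈ θ → y ∈ θ := by
        intro x y h hx
        rcases (hred _ _).1 h with ⟨h, -⟩ | ⟨h, -⟩
        · obtain ⟨z, hz, hxz⟩ := hL x hx
          exact hLf _ _ _ h hxz ▸ hz
        · obtain ⟨z, hz, hxz⟩ := hU x hx
          exact hUf _ _ _ h hxz ▸ hz
      refine ⟨aux x y h, aux y x ?_⟩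
      rw [hred] at h ⊢
      rw [Set.pair_comm y x]
      exact h.imp (fun h => ⟨hLs _ _ h.1, h.2⟩) (fun h => ⟨hUs _ _ h.1, h.2⟩)
    | refl => rfl
    | symm _ _ _ ih => exact ih.symm
    | trans _ _ _ _ _ ih1 ih2 => exact ih1.trans ih2
  by_cases hl : EqvGen red k l
  · have key : ∀ x y, EqvGen (fun u v => L u v ∨ U u v) x y →
        (EqvGen red k x ↔ EqvGen red k y) := by
      intro x y h
      induction h with
      | rel x y h =>
        have aux : ∀ x y, (L x y ∨ U x y) → EqvGen red k x → EqvGen red k y := by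
          intro x y h hx
          rcases h with h | h
          · by_cases hxk : x = k
            · subst hxk
              exact hLf _ _ _ hkl h ▸ hl
            by_cases hxl : x = l
            · subst hxl
              exact hLf _ _ _ (hLs _ _ hkl) h ▸ .refl _
            exact hLred _ _ hx h hxk hxl
          · exact hUred _ _ hx h
        exact ⟨aux x y h, aux y x (h.imp (hLs _ _) (hUs _ _))⟩
      | refl => rfl
      | symm _ _ _ ih => exact ih.symm
      | trans _ _ _ _ _ ih1 ih2 => exact ih1.trans ih2
    exact h1 ((key _ _ (hc k hk i hi)).1 (.refl _))
  · let C : Finset (Fin n) := Finset.univ.filter (fun x => EqvGen red k x)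
    have hC : ∀ x, x ∈ C ↔ EqvGen red k x := by intro x; simp [C]
    have e1 := tc_even C U hUs hUi hUf (by
      intro x hx
      rw [hC] at hx
      obtain ⟨y, hy, hxy⟩ := hU x ((hθ _ _ hx).1 hk)
      exact ⟨y, (hC _).2 (hUred _ _ hx hxy), hxy⟩)
    have hkC : k ∈ C := (hC _).2 (.refl _)
    have e2 := tc_even (C.erase k) L hLs hLi hLf (by
      intro x hx
      rw [Finset.mem_erase, hC] at hx
      obtain ⟨hxk, hx⟩ := hx
      obtain ⟨y, hy, hxy⟩ := hL x ((hθ _ _ hx).1 hk)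
      refine ⟨y, Finset.mem_erase.2 ⟨?_, (hC _).2 (hLred _ _ hx hxy hxk ?_)⟩, hxy⟩
      · rintro rfl
        exact hl (hLf _ _ _ (hLs _ _ hxy) hkl ▸ hx)
      · rintro rfl
        exact hl hx)
    rw [← Finset.card_erase_add_one hkC] at e1
    push_cast at e1
    rw [e2] at e1
    exact absurd e1 (by decide)

lemma tc_block {n : ℕ} (a : PElt n) (h : ∀ x : PV n, blockCard a x ≤ 2) {x y z : PV n}
    (hxy : a.r x y) (hne : y ≠ x) (hxz : a.r x z) : z = x ∨ z = y := by
  classical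
  by_contra hcon
  rw [not_or] at hcon
  have h2 := h x
  have h3 : ({x, y, z} : Set (PV n)) ⊆ {w | a.r x w} := by
    rintro w (rfl | rfl | rfl)
    · exact a.iseqv.refl _
    · exact hxy
    · exact hxz
  have h4 := Set.ncard_le_ncard h3 (Set.toFinite _)
  have h5 : ({x, y, z} : Set (PV n)).ncard = 3 :=
    Set.ncard_eq_three.2 ⟨x, y, z, hne.symm, fun e => hcon.1 e.symm, fun e => hcon.2 e.symm, rfl⟩
  have h6 : blockCard a x = ({w | a.r x w} : Set (PV n)).ncard := rfl
  omega

lemma tc_two {n : ℕ} (a : PElt n) {x y : PV n} (hxy : a.r x y) (hne : y ≠ x) :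
    2 ≤ blockCard a x := by
  have h3 : ({x, y} : Set (PV n)) ⊆ {w | a.r x w} := by
    rintro w (rfl | rfl)
    · exact a.iseqv.refl _
    · exact hxy
  have h4 := Set.ncard_le_ncard h3 (Set.toFinite _)
  rw [Set.ncard_pair hne.symm] at h4
  exact h4

lemma tc_partner {n : ℕ} (a : PElt n) {x : PV n} (h : blockCard a x = 2) :
    ∃ y, a.r x y ∧ y ≠ x := by
  by_contra hcon
  push Not at hcon
  have h6 : blockCard a x = ({w | a.r x w} : Set (PV n)).ncard := rfl
  have : ({w | a.r x w} : Set (PV n)) ⊆ {x} := fun w hw => hcon w hw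
  have h7 := Set.ncard_le_ncard this
  rw [Set.ncard_singleton, ← h6, h] at h7
  exact absurd h7 (by decide)

/-- The special vertices of the stacked graph: the middle copy of `θ` together with the freed
outer vertices. -/
def tcSp {n : ℕ} (θ : Set (Fin n)) (i j k l : Fin n) : TV n → Prop
  | .inl u => u = k ∨ u = l
  | .inr (.inl m) => m ∈ θ
  | .inr (.inr v) => v = i ∨ v = j

/-- The position of a vertex of the stacked graph, forgetting the layer. -/
def tcPos {n : ℕ} : TV n → Fin n
  | .inl u => u
  | .inr (.inl m) => m
  | .inr (.inr v) => v

open Classical in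
/-- A classifying map for the components of the stacked graph of a cover. -/
noncomputable def tcF {n : ℕ} (a : PElt n) (θ : Set (Fin n)) (i j k l : Fin n) (z : TV n) :
    Quotient (EqvGen.setoid (redEdge a i j k l)) ⊕ Quotient (stackSetoid a a) :=
  if tcSp θ i j k l z then .inl (Quotient.mk _ (tcPos z)) else .inr (Quotient.mk _ z)

theorem theta_cover_preserves (n : ℕ) (d : PElt n) (hd : d ∈ Dset (Motzkin n))
    (θ : Set (Fin n)) (hθ : θ ∈ ThetaSet d) (a b : PElt n)
    (ha : a ∈ Motzkin n) (hb : b ∈ Motzkin n) (hcov : IsThetaCover a θ b) :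
    (pmul a a = a → pmul b b = b) ∧ (a ∈ Jones n → b ∈ Jones n) := by
  classical
  obtain ⟨⟨⟨⟨-, hcomp⟩, hcyc⟩, -⟩, i, j, k, l, hi, hj, hk, hl, hlr, hur, rfl⟩ := hcov
  clear hθ hd
  obtain ⟨hij, haij, -, -⟩ := hlr
  obtain ⟨hkl, hakl, -, -⟩ := hur
  have hblk := fun {x y z} => tc_block a ha.2 (x := x) (y := y) (z := z)
  -- edges at vertices of the cycle
  have hLow : ∀ m ∈ θ, ∀ y, a.r (.inl m) y → ∃ m' ∈ θ, y = .inl m' := by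
    intro m hm y hy
    obtain ⟨j', hne, hr⟩ := (hcyc m hm).1
    rcases hblk hr (by simpa using hne.symm) hy with rfl | rfl
    · exact ⟨m, hm, rfl⟩
    · exact ⟨j', (hcomp m hm j').1 (.rel _ _ (.inl ⟨hne, hr⟩)), rfl⟩
  have hUp : ∀ m ∈ θ, ∀ y, a.r (.inr m) y → ∃ m' ∈ θ, y = .inr m' := by
    intro m hm y hy
    obtain ⟨j', hne, hr⟩ := (hcyc m hm).2
    rcases hblk hr (by simpa using hne.symm) hy with rfl | rfl
    · exact ⟨m, hm, rfl⟩
    · exact ⟨j', (hcomp m hm j').1 (.rel _ _ (.inr ⟨hne, hr⟩)), rfl⟩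
  have hLs : ∀ x y, LowEdge a x y → LowEdge a y x := fun x y h => ⟨h.1.symm, a.iseqv.symm h.2⟩
  have hUs : ∀ x y, UpEdge a x y → UpEdge a y x := fun x y h => ⟨h.1.symm, a.iseqv.symm h.2⟩
  have hLf : ∀ x y z, LowEdge a x y → LowEdge a x z → y = z := by
    intro x y z h1 h2
    rcases hblk h1.2 (by simpa using h1.1.symm) h2.2 with h | h
    · exact absurd (Sum.inl.inj h).symm h2.1
    · exact (Sum.inl.inj h).symm
  have hUf : ∀ x y z, UpEdge a x y → UpEdge a x z → y = z := by
    intro x y z h1 h2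
    rcases hblk h1.2 (by simpa using h1.1.symm) h2.2 with h | h
    · exact absurd (Sum.inr.inj h).symm h2.1
    · exact (Sum.inr.inj h).symm
  have hLθ : ∀ x ∈ θ, ∃ y ∈ θ, LowEdge a x y := by
    intro x hx
    obtain ⟨y, hy⟩ := (hcyc x hx).1
    exact ⟨y, (hcomp x hx y).1 (.rel _ _ (.inl hy)), hy⟩
  have hUθ : ∀ x ∈ θ, ∃ y ∈ θ, UpEdge a x y := by
    intro x hx
    obtain ⟨y, hy⟩ := (hcyc x hx).2
    exact ⟨y, (hcomp x hx y).1 (.rel _ _ (.inr hy)), hy⟩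
  have hc : ∀ x ∈ θ, ∀ y ∈ θ, EqvGen (fun u v => LowEdge a u v ∨ UpEdge a u v) x y :=
    fun x hx y hy => (hcomp x hx y).2 hy
  have hc' : ∀ x ∈ θ, ∀ y ∈ θ, EqvGen (fun u v => UpEdge a u v ∨ LowEdge a u v) x y := by
    intro x hx y hy
    exact (hc x hx y hy).mono (fun _ _ h => h.symm)
  have hKL : LowEdge a k l := ⟨hkl.ne, hakl⟩
  have hIJ : UpEdge a i j := ⟨hij.ne, haij⟩
  have rk : EqvGen (redEdge a i j k l) k i ∨ EqvGen (redEdge a i j k l) k j :=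
    tc_reach (LowEdge a) (UpEdge a) _ hLs (fun _ _ h => h.1) hLf hUs (fun _ _ h => h.1) hUf θ
      hLθ hUθ hc i j k l hi hk hKL (fun u v => Iff.rfl)
  have rl : EqvGen (redEdge a i j k l) l i ∨ EqvGen (redEdge a i j k l) l j :=
    tc_reach (LowEdge a) (UpEdge a) _ hLs (fun _ _ h => h.1) hLf hUs (fun _ _ h => h.1) hUf θ
      hLθ hUθ hc i j l k hi hl (hLs _ _ hKL)
      (fun u v => by rw [Set.pair_comm l k]; exact Iff.rfl)
  have ri : EqvGen (redEdge a i j k l) i k ∨ EqvGen (redEdge a i j k l) i l :=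
    tc_reach (UpEdge a) (LowEdge a) _ hUs (fun _ _ h => h.1) hUf hLs (fun _ _ h => h.1) hLf θ
      hUθ hLθ hc' k l i j hk hi hIJ (fun u v => or_comm)
  have rj : EqvGen (redEdge a i j k l) j k ∨ EqvGen (redEdge a i j k l) j l :=
    tc_reach (UpEdge a) (LowEdge a) _ hUs (fun _ _ h => h.1) hUf hLs (fun _ _ h => h.1) hLf θ
      hUθ hLθ hc' k l j i hk hj (hUs _ _ hIJ)
      (fun u v => by rw [Set.pair_comm j i]; exact or_comm)
  -- generating facts for the cover
  have bT : ∀ u v, (u = k ∨ u = l) → (v = i ∨ v = j) → EqvGen (redEdge a i j k l) u v →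
      (coverElt a i j k l).r (.inl u) (.inr v) := by
    intro u v hu hv h
    exact .rel _ _ (.inr ⟨u, v, hu, hv, h, .inl ⟨rfl, rfl⟩⟩)
  have bE : ∀ x y, a.r x y → x ≠ .inl k → x ≠ .inl l → x ≠ .inr i → x ≠ .inr j →
      (coverElt a i j k l).r x y := by
    intro x y h h1 h2 h3 h4
    refine .rel _ _ (.inl ⟨h, ?_, ?_⟩)
    · intro he
      have : x ∈ ({.inl k, .inl l} : Set (PV n)) := he ▸ (by simp)
      rcases this with h | h
      exacts [h1 h, h2 h]
    · intro he
      have : x ∈ ({.inr i, .inr j} : Set (PV n)) := he ▸ (by simp)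
      rcases this with h | h
      exacts [h3 h, h4 h]
  have bS : ∀ {x y}, (coverElt a i j k l).r x y → (coverElt a i j k l).r y x :=
    fun h => (coverElt a i j k l).iseqv.symm h
  have bTr : ∀ {x y z}, (coverElt a i j k l).r x y → (coverElt a i j k l).r y z →
      (coverElt a i j k l).r x z :=
    fun h h' => (coverElt a i j k l).iseqv.trans h h'
  have hpairL : ∀ u v : Fin n, ({(.inl u : PV n), .inl v} : Set (PV n)) = {.inl k, .inl l} →
      ({u, v} : Set (Fin n)) = {k, l} := by
    intro u v h
    have := congrArg (fun s => (Sum.inl ⁻¹' s : Set (Fin n))) h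
    ext w
    have := Set.ext_iff.1 this w
    simpa using this
  have hpairR : ∀ u v : Fin n, ({(.inr u : PV n), .inr v} : Set (PV n)) = {.inr i, .inr j} →
      ({u, v} : Set (Fin n)) = {i, j} := by
    intro u v h
    have := congrArg (fun s => (Sum.inr ⁻¹' s : Set (Fin n))) h
    ext w
    have := Set.ext_iff.1 this w
    simpa using this
  constructor
  · intro hidem
    -- special vertices are closed under the edges of the stacked graph of `a`
    have spU : ∀ p q, a.r p q → tcSp θ i j k l (upEmb p) → tcSp θ i j k l (upEmb q) := by
      intro p q h hp
      rcases p with u | m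
      · rcases hp with rfl | rfl
        · rcases hblk hakl (by simpa using hkl.ne') h with rfl | rfl
          exacts [.inl rfl, .inr rfl]
        · rcases hblk (a.iseqv.symm hakl) (by simpa using hkl.ne) h with rfl | rfl
          exacts [.inr rfl, .inl rfl]
      · obtain ⟨m', hm', rfl⟩ := hUp m hp q h
        exact hm'
    have spD : ∀ p q, a.r p q → tcSp θ i j k l (downEmb p) → tcSp θ i j k l (downEmb q) := by
      intro p q h hp
      rcases p with m | u
      · obtain ⟨m', hm', rfl⟩ := hLow m hp q h
        exact hm'
      · rcases hp with rfl | rfl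
        · rcases hblk haij (by simpa using hij.ne') h with rfl | rfl
          exacts [.inl rfl, .inr rfl]
        · rcases hblk (a.iseqv.symm haij) (by simpa using hij.ne) h with rfl | rfl
          exacts [.inr rfl, .inl rfl]
    have redb : ∀ u v, EqvGen (redEdge a i j k l) u v →
        (stackSetoid (coverElt a i j k l) (coverElt a i j k l)).r (.inr (.inl u)) (.inr (.inl v)) := by
      intro u v h
      induction h with
      | rel u v h =>
        rcases h with ⟨h, hne⟩ | ⟨h, hne⟩
        · refine .rel _ _ (.inr ⟨.inl u, .inl v, .rel _ _ (.inl ⟨h.2, fun he => hne (hpairL _ _ he), ?_⟩),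
            rfl, rfl⟩)
          intro he
          have : (.inl u : PV n) ∈ ({.inr i, .inr j} : Set (PV n)) := he ▸ (by simp)
          simp at this
        · refine .rel _ _ (.inl ⟨.inr u, .inr v, .rel _ _ (.inl ⟨h.2, ?_, fun he => hne (hpairR _ _ he)⟩),
            rfl, rfl⟩)
          intro he
          have : (.inr u : PV n) ∈ ({.inl k, .inl l} : Set (PV n)) := he ▸ (by simp)
          simp at this
      | refl => exact .refl _
      | symm _ _ _ ih => exact .symm _ _ ih
      | trans _ _ _ _ _ ih1 ih2 => exact .trans _ _ _ ih1 ih2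
    have stk : ∀ z w, (stackSetoid a a).r z w →
        (tcSp θ i j k l z ↔ tcSp θ i j k l w) ∧ (¬ tcSp θ i j k l z →
          (stackSetoid (coverElt a i j k l) (coverElt a i j k l)).r z w) := by
      intro z w h
      induction h with
      | rel z w h =>
        rcases h with ⟨p, q, h, rfl, rfl⟩ | ⟨p, q, h, rfl, rfl⟩
        · refine ⟨⟨spU p q h, spU q p (a.iseqv.symm h)⟩, fun hn => .rel _ _ (.inl ⟨p, q, ?_, rfl, rfl⟩)⟩
          apply bE p q h
          · rintro rfl; exact hn (.inl rfl)
          · rintro rfl; exact hn (.inr rfl)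
          · rintro rfl; exact hn hi
          · rintro rfl; exact hn hj
        · refine ⟨⟨spD p q h, spD q p (a.iseqv.symm h)⟩, fun hn => .rel _ _ (.inr ⟨p, q, ?_, rfl, rfl⟩)⟩
          apply bE p q h
          · rintro rfl; exact hn hk
          · rintro rfl; exact hn hl
          · rintro rfl; exact hn (.inl rfl)
          · rintro rfl; exact hn (.inr rfl)
      | refl => exact ⟨Iff.rfl, fun _ => .refl _⟩
      | symm _ _ _ ih => exact ⟨ih.1.symm, fun h => .symm _ _ (ih.2 (fun h' => h (ih.1.1 h')))⟩
      | trans _ _ _ _ _ ih1 ih2 =>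
        exact ⟨ih1.1.trans ih2.1, fun h => .trans _ _ _ (ih1.2 h) (ih2.2 (fun h' => h (ih1.1.2 h')))⟩
    have hid : ∀ x y, (stackSetoid a a).r (outEmb x) (outEmb y) ↔ a.r x y := by
      intro x y
      conv_rhs => rw [← hidem]
      rfl
    -- the classifying map is constant along edges
    have Fcov : ∀ (e : PV n → TV n), (∀ p q, a.r p q → tcSp θ i j k l (e p) → tcSp θ i j k l (e q)) →
        (∀ p q, a.r p q → (stackSetoid a a).r (e p) (e q)) →
        (∀ u, tcPos (e (.inl u)) = u) → (∀ u, tcPos (e (.inr u)) = u) →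
        (∀ u, (u = k ∨ u = l) → tcSp θ i j k l (e (.inl u))) →
        (∀ u, (u = i ∨ u = j) → tcSp θ i j k l (e (.inr u))) →
        (∀ p q, coverRel a i j k l p q → a.r p q → tcSp θ i j k l (e p) →
          EqvGen (redEdge a i j k l) (tcPos (e p)) (tcPos (e q))) →
        ∀ p q, (coverElt a i j k l).r p q → tcF a θ i j k l (e p) = tcF a θ i j k l (e q) := by
      intro e hsp hst hp1 hp2 hs1 hs2 hr p q h
      induction h with
      | rel p q h =>
        have h0 := h
        rcases h with ⟨h, -, -⟩ | ⟨u, v, hu, hv, h, h'⟩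
        · by_cases hs : tcSp θ i j k l (e p)
          · have hs' := hsp _ _ h hs
            simp only [tcF, if_pos hs, if_pos hs']
            exact congrArg Sum.inl (Quotient.sound (hr p q h0 h hs))
          · have hs' : ¬ tcSp θ i j k l (e q) := fun h' => hs (hsp _ _ (a.iseqv.symm h) h')
            simp only [tcF, if_neg hs, if_neg hs']
            exact congrArg Sum.inr (Quotient.sound (hst p q h))
        · have main : tcF a θ i j k l (e (.inl u)) = tcF a θ i j k l (e (.inr v)) := by
            simp only [tcF, if_pos (hs1 u hu), if_pos (hs2 v hv), hp1, hp2]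
            exact congrArg Sum.inl (Quotient.sound h)
          rcases h' with ⟨rfl, rfl⟩ | ⟨rfl, rfl⟩
          exacts [main, main.symm]
      | refl => rfl
      | symm _ _ _ ih => exact ih.symm
      | trans _ _ _ _ _ ih1 ih2 => exact ih1.trans ih2
    have rL : ∀ u v, coverRel a i j k l (.inl u) (.inl v) → EqvGen (redEdge a i j k l) u v := by
      intro u v h
      by_cases huv : u = v
      · exact huv ▸ .refl _
      rcases h with ⟨h, h1, -⟩ | ⟨_, _, _, _, _, h⟩
      · exact .rel _ _ (.inl ⟨⟨huv, h⟩, fun he => h1 (by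
          have := congrArg (fun s => (Sum.inl : Fin n → PV n) '' s) he
          simpa [Set.image_pair] using this)⟩)
      · simp at h
    have rR : ∀ u v, coverRel a i j k l (.inr u) (.inr v) → EqvGen (redEdge a i j k l) u v := by
      intro u v h
      by_cases huv : u = v
      · exact huv ▸ .refl _
      rcases h with ⟨h, -, h1⟩ | ⟨_, _, _, _, _, h⟩
      · exact .rel _ _ (.inr ⟨⟨huv, h⟩, fun he => h1 (by
          have := congrArg (fun s => (Sum.inr : Fin n → PV n) '' s) he
          simpa [Set.image_pair] using this)⟩)
      · simp at h
    have FU := Fcov upEmb spU (fun p q h => .rel _ _ (.inl ⟨p, q, h, rfl, rfl⟩))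
      (fun _ => rfl) (fun _ => rfl) (fun u hu => hu)
      (fun u hu => by rcases hu with rfl | rfl; exacts [hi, hj])
      (by
        intro p q h h' hs
        rcases p with u | m
        · have hu : u ∈ θ := by rcases hs with rfl | rfl; exacts [hk, hl]
          obtain ⟨m', -, rfl⟩ := hLow u hu q h'
          exact rL _ _ h
        · obtain ⟨m', -, rfl⟩ := hUp m hs q h'
          exact rR _ _ h)
    have FD := Fcov downEmb spD (fun p q h => .rel _ _ (.inr ⟨p, q, h, rfl, rfl⟩))
      (fun _ => rfl) (fun _ => rfl)
      (fun u hu => by rcases hu with rfl | rfl; exacts [hk, hl])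
      (fun u hu => hu)
      (by
        intro p q h h' hs
        rcases p with m | u
        · obtain ⟨m', -, rfl⟩ := hLow m hs q h'
          exact rL _ _ h
        · have hu : u ∈ θ := by rcases hs with rfl | rfl; exacts [hi, hj]
          obtain ⟨m', -, rfl⟩ := hUp u hu q h'
          exact rR _ _ h)
    have FS : ∀ z w, (stackSetoid (coverElt a i j k l) (coverElt a i j k l)).r z w →
        tcF a θ i j k l z = tcF a θ i j k l w := by
      intro z w h
      induction h with
      | rel z w h =>
        rcases h with ⟨p, q, h, rfl, rfl⟩ | ⟨p, q, h, rfl, rfl⟩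
        exacts [FU p q h, FD p q h]
      | refl => rfl
      | symm _ _ _ ih => exact ih.symm
      | trans _ _ _ _ _ ih1 ih2 => exact ih1.trans ih2
    apply Setoid.ext
    intro x y
    constructor
    · intro h
      have hF := FS _ _ h
      by_cases hx : tcSp θ i j k l (outEmb x)
      · by_cases hy : tcSp θ i j k l (outEmb y)
        · simp only [tcF, if_pos hx, if_pos hy] at hF
          have hr : EqvGen (redEdge a i j k l) (tcPos (outEmb x)) (tcPos (outEmb y)) :=
            Quotient.exact (Sum.inl.inj hF)
          rcases x with u | u <;> rcases y with v | v
          · have key : EqvGen (redEdge a i j k l) u i ∨ EqvGen (redEdge a i j k l) u j := by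
              rcases hx with rfl | rfl
              exacts [rk, rl]
            rcases key with h' | h'
            · exact bTr (bT u i hx (.inl rfl) h') (bS (bT v i hy (.inl rfl)
                (.trans _ _ _ (.symm _ _ hr) h')))
            · exact bTr (bT u j hx (.inr rfl) h') (bS (bT v j hy (.inr rfl)
                (.trans _ _ _ (.symm _ _ hr) h')))
          · exact bT u v hx hy hr
          · exact bS (bT v u hy hx (.symm _ _ hr))
          · have key : EqvGen (redEdge a i j k l) u k ∨ EqvGen (redEdge a i j k l) u l := by
              rcases hx with rfl | rfl
              exacts [ri, rj]
            rcases key with h' | h'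
            · exact bTr (bS (bT k u (.inl rfl) hx (.symm _ _ h'))) (bT k v (.inl rfl) hy
                (.trans _ _ _ (.symm _ _ h') hr))
            · exact bTr (bS (bT l u (.inr rfl) hx (.symm _ _ h'))) (bT l v (.inr rfl) hy
                (.trans _ _ _ (.symm _ _ h') hr))
        · simp [tcF, if_pos hx, if_neg hy] at hF
      · by_cases hy : tcSp θ i j k l (outEmb y)
        · simp [tcF, if_neg hx, if_pos hy] at hF
        · simp only [tcF, if_neg hx, if_neg hy] at hF
          have hr : (stackSetoid a a).r (outEmb x) (outEmb y) := Quotient.exact (Sum.inr.inj hF)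
          apply bE x y ((hid x y).1 hr)
          · rintro rfl; exact hx (.inl rfl)
          · rintro rfl; exact hx (.inr rfl)
          · rintro rfl; exact hx (.inl rfl)
          · rintro rfl; exact hx (.inr rfl)
    · intro h
      change EqvGen _ _ _ at h
      change (stackSetoid (coverElt a i j k l) (coverElt a i j k l)).r (outEmb x) (outEmb y)
      induction h with
      | rel x y h =>
        rcases h with ⟨h, h1, h2⟩ | ⟨u, v, hu, hv, h, h'⟩
        · by_cases hx : tcSp θ i j k l (outEmb x)
          · have : x = y := by
              rcases x with u | u
              · rcases hx with rfl | rfl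
                · rcases hblk hakl (by simpa using hkl.ne') h with rfl | rfl
                  · rfl
                  · exact absurd rfl h1
                · rcases hblk (a.iseqv.symm hakl) (by simpa using hkl.ne) h with rfl | rfl
                  · rfl
                  · exact absurd (Set.pair_comm _ _) h1
              · rcases hx with rfl | rfl
                · rcases hblk haij (by simpa using hij.ne') h with rfl | rfl
                  · rfl
                  · exact absurd rfl h2
                · rcases hblk (a.iseqv.symm haij) (by simpa using hij.ne) h with rfl | rfl
                  · rfl
                  · exact absurd (Set.pair_comm _ _) h2
            subst this
            exact .refl _
          · exact (stk _ _ ((hid x y).2 h)).2 hx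
        · have hbuv := bT u v hu hv h
          have main : (stackSetoid (coverElt a i j k l) (coverElt a i j k l)).r
              (outEmb (.inl u)) (outEmb (.inr v)) :=
            .trans _ _ _ (.rel _ _ (.inl ⟨.inl u, .inr v, hbuv, rfl, rfl⟩))
              (.trans _ _ _ (redb v u (.symm _ _ h))
                (.rel _ _ (.inr ⟨.inl u, .inr v, hbuv, rfl, rfl⟩)))
          rcases h' with ⟨rfl, rfl⟩ | ⟨rfl, rfl⟩
          · exact main
          · exact .symm _ _ main
      | refl => exact .refl _
      | symm _ _ _ ih => exact .symm _ _ ih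
      | trans _ _ _ _ _ ih1 ih2 => exact .trans _ _ _ ih1 ih2
  · intro haJ
    refine ⟨hb.1, fun x => le_antisymm (hb.2 x) ?_⟩
    by_cases h1 : x = .inl k
    · subst h1
      rcases rk with h | h
      · exact tc_two _ (bT k i (.inl rfl) (.inl rfl) h) (by simp)
      · exact tc_two _ (bT k j (.inl rfl) (.inr rfl) h) (by simp)
    by_cases h2 : x = .inl l
    · subst h2
      rcases rl with h | h
      · exact tc_two _ (bT l i (.inr rfl) (.inl rfl) h) (by simp)
      · exact tc_two _ (bT l j (.inr rfl) (.inr rfl) h) (by simp)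
    by_cases h3 : x = .inr i
    · subst h3
      rcases ri with h | h
      · exact tc_two _ (bS (bT k i (.inl rfl) (.inl rfl) (.symm _ _ h))) (by simp)
      · exact tc_two _ (bS (bT l i (.inr rfl) (.inl rfl) (.symm _ _ h))) (by simp)
    by_cases h4 : x = .inr j
    · subst h4
      rcases rj with h | h
      · exact tc_two _ (bS (bT k j (.inl rfl) (.inr rfl) (.symm _ _ h))) (by simp)
      · exact tc_two _ (bS (bT l j (.inr rfl) (.inr rfl) (.symm _ _ h))) (by simp)
    obtain ⟨y, hy, hne⟩ := tc_partner a (haJ.2 x)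
    exact tc_two _ (bE x y hy h1 h2 h3 h4) hne
end
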